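/- Let n ≥ 2 and let β ≥ 0 and α be real numbers such that either (n−3)/2 < β < (n−1)/2 and α < 2β − (n−3)/2, or β ≥ (n−1)/2 and α < β + 1. Then there is a constant C (depending on n, α, β and χ) such that for every Schwartz function q on ℝⁿ, the function G(η) := χ(η) ( iπ S₁(q)(η) + P(S_·(q))(η) ), where P(S_·(q))(η) := lim_{ε→0⁺} ∫_{{r>0 : |1−r|>ε}} S_r(q)(η)/(1−r) dr, is well defined for η ≠ 0 and satisfies ‖ ⟨·⟩^α G ‖_{L²(ℝⁿ)} ≤ C ‖q‖²_{W^{β,2}_2}. (This is the Sobolev bound for the double dispersion operator of backscattering: the Fourier transform of Q̃₂(q) equals G, so ‖Q̃₂(q)‖_{W^{α,2}} ≤ C‖q‖²_{W^{β,2}_2}.) -/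

import Mathlib

open MeasureTheory Filter Set
open scoped ENNReal RealInnerProductSpace

noncomputable section

abbrev Euc (n : ℕ) := EuclideanSpace ℝ (Fin n)

/-- The Japanese bracket `⟨x⟩ = (1+|x|²)^{1/2}`. -/
def jap {n : ℕ} (x : Euc n) : ℝ := Real.sqrt (1 + ‖x‖ ^ 2)

/-- The Ewald sphere measure `σ_{rη}`: the `(n-1)`-dimensional Hausdorff measure restricted
to `Γ_r(η) = {ξ : |ξ - η/2| = r|η|/2}`. -/
def ewaldM (n : ℕ) (r : ℝ) (η : Euc n) : Measure (Euc n) :=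
  (MeasureTheory.Measure.hausdorffMeasure ((n : ℝ) - 1)).restrict
    (Metric.sphere ((2 : ℝ)⁻¹ • η) (r * ‖η‖ / 2))

/-- The Fourier transform `f̂(ξ) = ∫ e^{-iξ·x} f(x) dx`. -/
def ft {n : ℕ} (f : Euc n → ℂ) (ξ : Euc n) : ℂ :=
  ∫ x : Euc n, Complex.exp (-Complex.I * ((⟪ξ, x⟫ : ℝ) : ℂ)) * f x

/-- `⟨D⟩^β f`: inverse Fourier transform of `⟨ξ⟩^β f̂(ξ)`. -/
def besselD {n : ℕ} (β : ℝ) (f : Euc n → ℂ) (x : Euc n) : ℂ :=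
  (((2 * Real.pi) ^ n : ℝ)⁻¹ : ℝ) •
    ∫ ξ : Euc n, Complex.exp (Complex.I * ((⟪ξ, x⟫ : ℝ) : ℂ)) *
      (((jap ξ ^ β : ℝ) : ℂ) * ft f ξ)

/-- The weighted Sobolev norm `‖f‖_{W^{β,2}_δ} = ‖⟨·⟩^δ ⟨D⟩^β f‖_{L²}`. -/
def wSobNorm {n : ℕ} (β δ : ℝ) (f : Euc n → ℂ) : ℝ≥0∞ :=
  eLpNorm (fun x : Euc n => (jap x ^ δ : ℝ) • besselD β f x) 2 volume

/-- The spherical operator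
`S_r(q)(η) = (2/(|η|(1+r))) ∫_{Γ_r(η)} q̂(ξ) q̂(η-ξ) dσ_{rη}(ξ)`. -/
def Sr {n : ℕ} (r : ℝ) (q : Euc n → ℂ) (η : Euc n) : ℂ :=
  ((2 / (‖η‖ * (1 + r))) : ℝ) • ∫ ξ, ft q ξ * ft q (η - ξ) ∂(ewaldM n r η)

/-- `K_r(g₁,g₂)(η) = (1/|η|) ∫_{Γ_r(η)} |g₁(ξ)||g₂(η-ξ)| dσ_{rη}(ξ)`. -/
def Kr {n : ℕ} (r : ℝ) (g₁ g₂ : Euc n → ℂ) (η : Euc n) : ℝ :=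
  ‖η‖⁻¹ * ∫ ξ, ‖g₁ ξ‖ * ‖g₂ (η - ξ)‖ ∂(ewaldM n r η)

section Helpers
open MeasureTheory Filter Set
open scoped ENNReal RealInnerProductSpace NNReal Pointwise FourierTransform SchwartzMap LineDeriv Topology

lemma haus_antilip {X Y : Type*} [MetricSpace X] [MeasurableSpace X] [BorelSpace X]
    [MetricSpace Y] [MeasurableSpace Y] [BorelSpace Y] (f : X → Y) (s : Set X) (K : ℝ≥0) (d : ℝ)
    (hd : 0 ≤ d) (h : ∀ x ∈ s, ∀ y ∈ s, dist x y ≤ K * dist (f x) (f y)) :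
    Measure.hausdorffMeasure d s ≤ (K : ℝ≥0∞) ^ d * Measure.hausdorffMeasure d (f '' s) := by
  have h1 : AntilipschitzWith K (s.domRestrict f) :=
    AntilipschitzWith.of_le_mul_dist fun x y => h x x.2 y y.2
  have h2 := h1.le_hausdorffMeasure_image hd univ
  have h3 := (isometry_subtype_coe (s := s)).hausdorffMeasure_image (d := d) (Or.inl hd) univ
  rw [← h3] at h2
  simpa [Set.image_univ, Set.range_domRestrict] using h2

/-- Hausdorff measure on Euclidean space is bounded by Lebesgue. -/
lemma haus_euc_le (n : ℕ) : ∃ C : ℝ≥0, ∀ s : Set (Euc n),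
    Measure.hausdorffMeasure (n : ℝ) s ≤ C * volume s := by
  have h := PiLp.antilipschitzWith_ofLp 2 (fun _ : Fin n => ℝ)
  generalize ((Fintype.card (Fin n) : ℝ≥0) ^ (1 / (2 : ℝ≥0∞)).toReal) = K at h
  refine ⟨K ^ (n : ℝ), fun s => ?_⟩
  have h2 := h.le_hausdorffMeasure_image (d := n) (by positivity) s
  refine h2.trans (le_of_eq ?_)
  have e : (Measure.hausdorffMeasure (n : ℝ) : Measure (Fin n → ℝ)) = volume := by
    rw [← hausdorffMeasure_pi_real]; simp
  rw [e]
  have e2 := (PiLp.volume_preserving_ofLp (Fin n))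
  have e3 := e2.measure_preimage_equiv (f := MeasurableEquiv.toLp 2 (Fin n → ℝ) |>.symm)
    (WithLp.ofLp '' s)
  rw [← e3]
  congr 1
  · rw [ENNReal.coe_rpow_of_nonneg _ (by positivity)]
  · congr 1
    exact ((MeasurableEquiv.toLp 2 (Fin n → ℝ)).symm.injective.preimage_image s)

lemma chart_antilip (m : ℕ) (i : Fin (m+1)) (ε : ℝ) (hε : ε = 1 ∨ ε = -1) (c : ℝ) (hc : 0 < c) :
    ∃ K : ℝ≥0, ∀ x y : Euc (m+1), ‖x‖ = 1 → ‖y‖ = 1 → c ≤ ε * x i → c ≤ ε * y i →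
      dist x y ≤ K * dist (fun j => x (i.succAbove j)) (fun j => y (i.succAbove j)) := by
  refine ⟨⟨m + 1 + m / c, by positivity⟩, fun x y hx hy hxc hyc => ?_⟩
  set D := dist (fun j => x (i.succAbove j)) (fun j => y (i.succAbove j)) with hD
  have hD0 : 0 ≤ D := dist_nonneg
  have hj : ∀ j, |x (i.succAbove j) - y (i.succAbove j)| ≤ D := fun j => by
    have := dist_le_pi_dist (fun j => x (i.succAbove j)) (fun j => y (i.succAbove j)) j
    simpa [Real.dist_eq] using this
  have sx : x i ^ 2 + ∑ j, x (i.succAbove j) ^ 2 = 1 := by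
    have := EuclideanSpace.norm_sq_eq x
    rw [hx, Fin.sum_univ_succAbove _ i] at this
    simpa using this.symm
  have sy : y i ^ 2 + ∑ j, y (i.succAbove j) ^ 2 = 1 := by
    have := EuclideanSpace.norm_sq_eq y
    rw [hy, Fin.sum_univ_succAbove _ i] at this
    simpa using this.symm
  have bx : ∀ (z : Euc (m+1)) j, ‖z‖ = 1 → |z j| ≤ 1 := fun z j hz => by
    have := PiLp.norm_apply_le z j
    rw [hz] at this; simpa using this
  have key : |x i ^ 2 - y i ^ 2| ≤ 2 * m * D := by
    have : x i ^ 2 - y i ^ 2 = ∑ j, (y (i.succAbove j) ^ 2 - x (i.succAbove j) ^ 2) := by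
      rw [Finset.sum_sub_distrib]; linarith
    rw [this]
    calc _ ≤ ∑ j, |y (i.succAbove j) ^ 2 - x (i.succAbove j) ^ 2| := Finset.abs_sum_le_sum_abs _ _
      _ ≤ ∑ j : Fin m, 2 * D := by
        refine Finset.sum_le_sum fun j _ => ?_
        have : y (i.succAbove j) ^ 2 - x (i.succAbove j) ^ 2 =
          (x (i.succAbove j) - y (i.succAbove j)) * (-(x (i.succAbove j) + y (i.succAbove j))) := by ring
        rw [this, abs_mul, abs_neg]
        have h1 := bx x (i.succAbove j) hx
        have h2 := bx y (i.succAbove j) hy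
        have h3 := abs_add_le (x (i.succAbove j)) (y (i.succAbove j))
        nlinarith [hj j, abs_nonneg (x (i.succAbove j) - y (i.succAbove j))]
      _ = _ := by simp; ring
  have hi : |x i - y i| ≤ m / c * D := by
    have h1 : |x i ^ 2 - y i ^ 2| = |x i - y i| * |x i + y i| := by
      rw [← abs_mul]; ring_nf
    have h2 : 2 * c ≤ |x i + y i| := by
      rcases hε with rfl | rfl
      · exact le_trans (by linarith) (le_abs_self _)
      · exact le_trans (by linarith) (neg_le_abs _)
    rw [h1] at key
    rw [div_mul_eq_mul_div, le_div_iff₀ hc]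
    nlinarith [abs_nonneg (x i - y i)]
  have : dist x y ≤ |x i - y i| + ∑ j, |x (i.succAbove j) - y (i.succAbove j)| := by
    rw [dist_eq_norm, EuclideanSpace.norm_eq]
    apply Real.sqrt_le_iff.2
    refine ⟨by positivity, ?_⟩
    rw [← Fin.sum_univ_succAbove (fun j => |x j - y j|) i]
    simpa using Finset.sum_sq_le_sq_sum_of_nonneg (s := Finset.univ) (f := fun j => |x j - y j|) (fun j _ => abs_nonneg _)
  refine this.trans ?_
  have : ∑ j, |x (i.succAbove j) - y (i.succAbove j)| ≤ m * D := by
    calc _ ≤ ∑ j : Fin m, D := Finset.sum_le_sum fun j _ => hj j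
      _ = _ := by simp
  change _ ≤ (m + 1 + m / c) * D
  nlinarith

lemma normalize_lip {E : Type*} [NormedAddCommGroup E] [NormedSpace ℝ E] (x y : E)
    (hx : 1/2 ≤ ‖x‖) (hy : 1/2 ≤ ‖y‖) :
    ‖(‖x‖⁻¹ • x) - (‖y‖⁻¹ • y)‖ ≤ 4 * ‖x - y‖ := by
  have hx0 : 0 < ‖x‖ := by linarith
  have hy0 : 0 < ‖y‖ := by linarith
  have e : (‖x‖⁻¹ • x) - (‖y‖⁻¹ • y) = ‖x‖⁻¹ • ((x - y) + (‖y‖ - ‖x‖) • (‖y‖⁻¹ • y)) := by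
    rw [smul_add, smul_sub, sub_smul, smul_sub, smul_smul ‖y‖, mul_inv_cancel₀ hy0.ne', one_smul,
      smul_smul ‖x‖⁻¹ ‖x‖, inv_mul_cancel₀ hx0.ne', one_smul]
    abel
  rw [e, norm_smul, norm_inv, norm_norm]
  have h1 : ‖(x - y) + (‖y‖ - ‖x‖) • (‖y‖⁻¹ • y)‖ ≤ 2 * ‖x - y‖ := by
    refine (norm_add_le _ _).trans ?_
    rw [norm_smul, norm_smul, norm_inv, norm_norm, inv_mul_cancel₀ hy0.ne', mul_one]
    have := abs_norm_sub_norm_le y x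
    rw [norm_sub_rev] at this
    rw [Real.norm_eq_abs]; linarith
  have h2 : ‖x‖⁻¹ ≤ 2 := by
    rw [inv_le_comm₀ hx0 (by norm_num)]; linarith
  calc _ ≤ 2 * (2 * ‖x - y‖) := by gcongr
    _ = _ := by ring

lemma chart_bound (m : ℕ) (i : Fin (m+1)) (ε : ℝ) (hε : ε = 1 ∨ ε = -1) (c : ℝ) (hc : 0 < c) :
    ∃ C : ℝ≥0, ∀ A : Set (Euc (m+1)), (∀ x ∈ A, ‖x‖ = 1 ∧ c ≤ ε * x i) →
      Measure.hausdorffMeasure (m : ℝ) A ≤ C * volume (Ioo (0:ℝ) 1 • A) := by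
  obtain ⟨K, hK⟩ := chart_antilip m i ε hε c hc
  obtain ⟨C, hC⟩ := haus_euc_le (m+1)
  refine ⟨K ^ (m:ℝ) * (2 * (4 ^ ((m+1 : ℕ):ℝ) * C)), fun A hA => ?_⟩
  set π : Euc (m+1) → (Fin m → ℝ) := fun x j => x (i.succAbove j) with hπ
  have h1 := haus_antilip π A K m (by positivity)
    (fun x hx y hy => hK x y (hA x hx).1 (hA y hy).1 (hA x hx).2 (hA y hy).2)
  have e : (Measure.hausdorffMeasure (m : ℝ) : Measure (Fin m → ℝ)) = volume := by
    rw [← hausdorffMeasure_pi_real]; simp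
  rw [e] at h1
  set B : Set (Euc (m+1)) := Ioo (1/2:ℝ) 1 • A
  have hB : B ⊆ Ioo (0:ℝ) 1 • A := Set.smul_subset_smul_right (Ioo_subset_Ioo_left (by norm_num))
  let Φ : Euc (m+1) → (Fin (m+1) → ℝ) := fun x => i.insertNth ‖x‖ (π (‖x‖⁻¹ • x))
  have hBn : ∀ x ∈ B, 1/2 ≤ ‖x‖ := by
    rintro _ ⟨r, hr, a, ha, rfl⟩
    simp only [norm_smul, (hA a ha).1, Real.norm_eq_abs, mul_one]
    exact hr.1.le.trans (le_abs_self _)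
  have hΦ : LipschitzOnWith 4 Φ B := by
    refine LipschitzOnWith.of_dist_le_mul fun x hx y hy => ?_
    rw [dist_pi_le_iff (by positivity)]
    intro j
    refine Fin.succAboveCases i ?_ (fun j => ?_) j
    · simp only [Φ, Fin.insertNth_apply_same, Real.dist_eq]
      have := abs_norm_sub_norm_le x y
      rw [dist_eq_norm]
      have h0 := norm_nonneg (x - y)
      push_cast; linarith
    · simp only [Φ, Fin.insertNth_apply_succAbove]
      have := normalize_lip x y (hBn x hx) (hBn y hy)
      rw [dist_eq_norm x y]
      refine le_trans ?_ this
      have h3 := PiLp.norm_apply_le ((‖x‖⁻¹ • x) - (‖y‖⁻¹ • y)) (i.succAbove j)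
      refine le_trans (le_of_eq ?_) h3
      simp [π, Real.dist_eq]
  have h2 := hΦ.hausdorffMeasure_image_le (d := ((m+1 : ℕ):ℝ)) (by positivity)
  have e' : (Measure.hausdorffMeasure ((m+1 : ℕ) : ℝ) : Measure (Fin (m+1) → ℝ)) = volume := by
    rw [← hausdorffMeasure_pi_real]; simp
  rw [e'] at h2
  have hsub : (MeasurableEquiv.piFinSuccAbove (fun _ => ℝ) i) ⁻¹' (Ioo (1/2:ℝ) 1 ×ˢ (π '' A)) ⊆ Φ '' B := by
    intro z hz
    obtain ⟨hz1, a, ha, hz2⟩ := hz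
    change z i ∈ _ at hz1
    change π a = fun j => z (i.succAbove j) at hz2
    refine ⟨z i • a, ⟨z i, hz1, a, ha, rfl⟩, ?_⟩
    have hpos : 0 < z i := by linarith [hz1.1]
    have hn : ‖z i • a‖ = z i := by
      rw [norm_smul, (hA a ha).1, mul_one, Real.norm_eq_abs, abs_of_pos hpos]
    funext j
    refine Fin.succAboveCases i ?_ (fun j => ?_) j
    · simp only [Φ, Fin.insertNth_apply_same, hn]
    · simp only [Φ, Fin.insertNth_apply_succAbove, hn, smul_smul, inv_mul_cancel₀ hpos.ne', one_smul, hz2]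
  have h3 := (volume_preserving_piFinSuccAbove (fun _ : Fin (m+1) => ℝ) i).measure_preimage_equiv (Ioo (1/2:ℝ) 1 ×ˢ (π '' A))
  have h4 : volume (Ioo (1/2:ℝ) 1 ×ˢ (π '' A)) = ENNReal.ofReal (1/2) * volume (π '' A) := by
    rw [Measure.volume_eq_prod, Measure.prod_prod, Real.volume_Ioo]; norm_num
  have h5 : volume (π '' A) ≤ 2 * (4 ^ ((m+1 : ℕ):ℝ) * (C * volume B)) := by
    have : ENNReal.ofReal (1/2) * volume (π '' A) ≤ 4 ^ ((m+1 : ℕ):ℝ) * (C * volume B) := by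
      rw [← h4, ← h3]
      refine (measure_mono hsub).trans (h2.trans ?_)
      gcongr
      · simp
      · exact hC B
    calc volume (π '' A) = 2 * (ENNReal.ofReal (1/2) * volume (π '' A)) := by
          rw [← mul_assoc, show (2:ℝ≥0∞) = ENNReal.ofReal 2 by simp, ← ENNReal.ofReal_mul (by norm_num)]
          norm_num
      _ ≤ _ := by gcongr
  refine h1.trans ?_
  calc (K:ℝ≥0∞) ^ (m:ℝ) * volume (π '' A) ≤ (K:ℝ≥0∞) ^ (m:ℝ) * (2 * (4 ^ ((m+1 : ℕ):ℝ) * (C * volume (Ioo (0:ℝ) 1 • A)))) := by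
        gcongr; exact h5.trans (by gcongr)
    _ = _ := by
        rw [ENNReal.coe_mul, ENNReal.coe_mul, ENNReal.coe_mul, ENNReal.coe_rpow_of_nonneg _ (by positivity),
          ENNReal.coe_rpow_of_nonneg _ (by positivity)]
        simp [mul_assoc]

/-- The `(n-1)`-dimensional Hausdorff measure on the unit sphere. -/
def sphM (n : ℕ) : Measure (Metric.sphere (0 : Euc n) 1) :=
  Measure.comap (↑) (Measure.hausdorffMeasure ((n : ℝ) - 1) : Measure (Euc n))

lemma sphM_le (n : ℕ) (hn : 2 ≤ n) : ∃ C : ℝ≥0,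
    sphM n ≤ C • (volume : Measure (Euc n)).toSphere := by
  obtain ⟨m, rfl⟩ : ∃ m, n = m + 1 := ⟨n - 1, by omega⟩
  have hc : (0:ℝ) < 1 / (m + 1) := by positivity
  choose C hC using fun i => chart_bound m i 1 (Or.inl rfl) _ hc
  choose C' hC' using fun i => chart_bound m i (-1) (Or.inr rfl) _ hc
  refine ⟨∑ i, (C i + C' i), Measure.le_iff.2 fun s hs => ?_⟩
  rw [sphM, comap_subtype_coe_apply Metric.isClosed_sphere.measurableSet]
  rw [Measure.smul_apply, Measure.toSphere_apply' _ hs]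
  have hm : (((m+1 : ℕ) : ℝ) - 1) = m := by push_cast; ring
  rw [hm]
  set A : Set (Euc (m+1)) := (↑) '' s
  have hA : ∀ x ∈ A, ‖x‖ = 1 := by
    rintro _ ⟨x, _, rfl⟩; simp
  have hcov : A ⊆ ⋃ i, ((A ∩ {x | 1 / ((m:ℝ) + 1) ≤ 1 * x i}) ∪ (A ∩ {x | 1 / ((m:ℝ) + 1) ≤ (-1) * x i})) := by
    intro x hx
    by_contra hcon
    simp only [mem_iUnion, mem_union, mem_inter_iff, hx, true_and, Set.mem_ofPred_eq, not_exists, not_or, not_le] at hcon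
    have h1 := EuclideanSpace.norm_sq_eq x
    rw [hA x hx] at h1
    have : ∑ i, ‖x i‖ ^ 2 < ∑ i : Fin (m+1), 1 / ((m:ℝ)+1) := by
      apply Finset.sum_lt_sum_of_nonempty Finset.univ_nonempty
      intro i _
      have h2 : |x i| < 1 / ((m:ℝ)+1) := abs_lt.2 ⟨by linarith [(hcon i).2], by linarith [(hcon i).1]⟩
      have h3 : 1 / ((m:ℝ)+1) ≤ 1 := by
        rw [div_le_one (by positivity)]; linarith [Nat.cast_nonneg (α := ℝ) m]
      rw [Real.norm_eq_abs]
      nlinarith [abs_nonneg (x i)]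
    have h4 : ∑ i : Fin (m+1), 1 / ((m:ℝ)+1) = 1 := by
      simp; field_simp
    linarith
  have hle : ∀ i, Measure.hausdorffMeasure (m:ℝ) ((A ∩ {x | 1 / ((m:ℝ) + 1) ≤ 1 * x i}) ∪ (A ∩ {x | 1 / ((m:ℝ) + 1) ≤ (-1) * x i})) ≤ ((C i + C' i : ℝ≥0) : ℝ≥0∞) * volume (Ioo (0:ℝ) 1 • A) := by
    intro i
    refine (measure_union_le _ _).trans ?_
    push_cast
    rw [add_mul]
    refine add_le_add ((hC i _ fun x hx => ⟨hA x hx.1, hx.2⟩).trans ?_) ((hC' i _ fun x hx => ⟨hA x hx.1, hx.2⟩).trans ?_)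
    · gcongr; exact inter_subset_left
    · gcongr; exact inter_subset_left
  calc _ ≤ _ := measure_mono hcov
    _ ≤ _ := measure_iUnion_fintype_le _ _
    _ ≤ ∑ i, ((C i + C' i : ℝ≥0) : ℝ≥0∞) * volume (Ioo (0:ℝ) 1 • A) := Finset.sum_le_sum fun i _ => hle i
    _ = ((∑ i, (C i + C' i) : ℝ≥0) : ℝ≥0∞) * volume (Ioo (0:ℝ) 1 • A) := by
        rw [← Finset.sum_mul]; push_cast; rfl
    _ ≤ _ := by
        rw [ENNReal.smul_def, smul_eq_mul]
        gcongr
        simp only [finrank_euclideanSpace, Fintype.card_fin]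
        push_cast
        exact le_mul_of_one_le_left (by positivity) (by simp)

lemma sphM_finite (n : ℕ) (hn : 2 ≤ n) : IsFiniteMeasure (sphM n) := by
  obtain ⟨C, hC⟩ := sphM_le n hn
  refine ⟨lt_of_le_of_lt (hC univ) ?_⟩
  exact measure_lt_top _ _

lemma polar_lintegral (n : ℕ) (hn : 2 ≤ n) (g : Euc n → ℝ≥0∞) (hg : Measurable g) :
    ∫⁻ θ : Metric.sphere (0 : Euc n) 1, ∫⁻ r in Ioi (0:ℝ), ENNReal.ofReal (r ^ (n-1)) * g (r • (θ : Euc n))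
      ∂volume ∂((volume : Measure (Euc n)).toSphere) = ∫⁻ x, g x := by
  have : NeZero n := ⟨by omega⟩
  have : Nonempty (Fin n) := ⟨0⟩
  have h := (volume : Measure (Euc n)).measurePreserving_homeomorphUnitSphereProd
  have h1 : ∫⁻ x, g x = ∫⁻ x : ({0}ᶜ : Set (Euc n)), g x.1 ∂(Measure.comap Subtype.val volume) := by
    rw [lintegral_subtype_comap (measurableSet_singleton _).compl]
    rw [restrict_compl_singleton]
  have h2 := h.symm (e := (homeomorphUnitSphereProd (Euc n)).toMeasurableEquiv)
  have h3 := h2.lintegral_comp (f := fun x => g x.1) (hg.comp measurable_subtype_coe)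
  rw [h1, ← h3]
  rw [lintegral_prod]
  · refine lintegral_congr fun θ => ?_
    simp only [finrank_euclideanSpace, Fintype.card_fin]
    rw [Measure.volumeIoiPow, lintegral_withDensity_eq_lintegral_mul]
    · rw [← lintegral_subtype_comap measurableSet_Ioi]
      rfl
    · fun_prop
    · refine hg.comp (measurable_subtype_coe.comp ?_)
      exact (homeomorphUnitSphereProd (Euc n)).toMeasurableEquiv.symm.measurable.comp measurable_prodMk_left
  · refine (hg.comp (measurable_subtype_coe.comp ?_)).aemeasurable
    exact (homeomorphUnitSphereProd (Euc n)).toMeasurableEquiv.symm.measurable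

lemma polar_le (n : ℕ) (hn : 2 ≤ n) : ∃ C : ℝ≥0, ∀ g : Euc n → ℝ≥0∞, Measurable g →
    ∫⁻ θ : Metric.sphere (0 : Euc n) 1, ∫⁻ r in Ioi (0:ℝ), ENNReal.ofReal (r ^ (n-1)) * g (r • (θ : Euc n))
      ∂volume ∂(sphM n) ≤ C * ∫⁻ x, g x := by
  obtain ⟨C, hC⟩ := sphM_le n hn
  refine ⟨C, fun g hg => ?_⟩
  rw [← polar_lintegral n hn g hg]
  refine (lintegral_mono' hC le_rfl).trans ?_
  rw [lintegral_smul_measure]; rfl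

lemma polar_le_aff (n : ℕ) (hn : 2 ≤ n) : ∃ C : ℝ≥0, ∀ (g : Euc n → ℝ≥0∞) (p : Euc n) (ρ : ℝ), 0 < ρ →
    Measurable g →
    ∫⁻ θ : Metric.sphere (0 : Euc n) 1, ∫⁻ r in Ioi (0:ℝ), ENNReal.ofReal (r ^ (n-1)) * g (p + (r * ρ) • (θ : Euc n))
      ∂volume ∂(sphM n) ≤ C * (ENNReal.ofReal ((ρ ^ n)⁻¹) * ∫⁻ x, g x) := by
  obtain ⟨C, hC⟩ := polar_le n hn
  refine ⟨C, fun g p ρ hρ hg => ?_⟩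
  have := hC (fun x => g (p + ρ • x)) (hg.comp (by fun_prop))
  simp only [smul_smul] at this
  simp only [mul_comm _ ρ]
  refine this.trans (le_of_eq ?_)
  congr 1
  have h1 := Measure.map_addHaar_smul (volume : Measure (Euc n)) hρ.ne'
  have h2 : ∫⁻ x, g (p + ρ • x) = ∫⁻ x, g (p + x) ∂(Measure.map (ρ • ·) (volume : Measure (Euc n))) := by
    rw [lintegral_map (f := fun x => g (p + x)) (hg.comp (by fun_prop)) (by fun_prop)]
  rw [h2, h1, lintegral_smul_measure, lintegral_add_left_eq_self]
  simp only [finrank_euclideanSpace, Fintype.card_fin, smul_eq_mul]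
  rw [abs_of_pos (by positivity)]

lemma ewaldM_eq (n : ℕ) (hn : 2 ≤ n) (r : ℝ) (hr : 0 < r) (η : Euc n) (hη : η ≠ 0) :
    ewaldM n r η = ENNReal.ofReal ((r * (‖η‖/2)) ^ (n-1)) •
      Measure.map (fun θ : Metric.sphere (0 : Euc n) 1 => (2:ℝ)⁻¹ • η + (r * (‖η‖/2)) • (θ : Euc n)) (sphM n) := by
  have hρ : 0 < r * (‖η‖/2) := by have := norm_pos_iff.2 hη; positivity
  have hρ' : r * ‖η‖ / 2 = r * (‖η‖/2) := by ring
  rw [ewaldM, hρ']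
  generalize r * (‖η‖/2) = ρ at *
  ext s hs
  rw [Measure.restrict_apply hs, Measure.smul_apply, Measure.map_apply (by fun_prop) hs, sphM,
    comap_subtype_coe_apply Metric.isClosed_sphere.measurableSet]
  set A : Set (Euc n) := Subtype.val '' ((fun θ : Metric.sphere (0 : Euc n) 1 => (2:ℝ)⁻¹ • η + ρ • (θ : Euc n)) ⁻¹' s)
  have hset : s ∩ Metric.sphere ((2:ℝ)⁻¹ • η) ρ = (IsometryEquiv.addLeft ((2:ℝ)⁻¹ • η)) '' (ρ • A) := by
    ext x
    constructor
    · rintro ⟨hx, hxs⟩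
      rw [mem_sphere_iff_norm] at hxs
      refine ⟨x - (2:ℝ)⁻¹ • η, ⟨ρ⁻¹ • (x - (2:ℝ)⁻¹ • η), ⟨⟨ρ⁻¹ • (x - (2:ℝ)⁻¹ • η), ?_⟩, ?_, rfl⟩, ?_⟩, by simp⟩
      · rw [mem_sphere_zero_iff_norm, norm_smul, hxs, norm_inv, Real.norm_eq_abs, abs_of_pos hρ, inv_mul_cancel₀ hρ.ne']
      · simpa [smul_smul, mul_inv_cancel₀ hρ.ne'] using hx
      · simp [smul_smul, mul_inv_cancel₀ hρ.ne']
    · rintro ⟨_, ⟨_, ⟨θ, hθ, rfl⟩, rfl⟩, rfl⟩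
      refine ⟨hθ, ?_⟩
      simp [norm_smul, abs_of_pos hρ]
  have hn1 : (0:ℝ) ≤ (n:ℝ) - 1 := by
    have : (2:ℝ) ≤ n := by exact_mod_cast hn
    linarith
  rw [hset, IsometryEquiv.hausdorffMeasure_image, Measure.hausdorffMeasure_smul₀ hn1 hρ.ne']
  rw [ENNReal.smul_def]
  congr 1
  have : ((n:ℝ) - 1) = ((n-1 : ℕ) : ℝ) := by rw [Nat.cast_sub (by omega)]; simp
  rw [this, NNReal.rpow_natCast, ENNReal.coe_pow, ENNReal.ofReal_pow hρ.le]
  congr 1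
  rw [← Real.enorm_of_nonneg hρ.le]; rfl

lemma integral_ewaldM (n : ℕ) (hn : 2 ≤ n) (r : ℝ) (hr : 0 < r) (η : Euc n) (hη : η ≠ 0) (F : Euc n → ℂ) :
    ∫ ξ, F ξ ∂(ewaldM n r η) = ((r * (‖η‖/2)) ^ (n-1)) •
      ∫ θ : Metric.sphere (0 : Euc n) 1, F ((2:ℝ)⁻¹ • η + (r * (‖η‖/2)) • (θ : Euc n)) ∂(sphM n) := by
  have hρ : 0 < r * (‖η‖/2) := by have := norm_pos_iff.2 hη; positivity
  rw [ewaldM_eq n hn r hr η hη, integral_smul_measure, ENNReal.toReal_ofReal (by positivity)]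
  generalize r * (‖η‖/2) = ρ at *
  rw [MeasurableEmbedding.integral_map]
  have h1 : MeasurableEmbedding (fun x : Euc n => (2:ℝ)⁻¹ • η + ρ • x) :=
    ((Homeomorph.smulOfNeZero ρ hρ.ne').trans (Homeomorph.addLeft ((2:ℝ)⁻¹ • η))).measurableEmbedding
  exact h1.comp (MeasurableEmbedding.subtype_coe Metric.isClosed_sphere.measurableSet)

lemma rpow_compare {x y K : ℝ} (a : ℝ) (hx : 0 < x) (h1 : x ≤ K * y) (h2 : y ≤ K * x) (hy : 0 < y) (hK : 0 < K) :
    y ^ a ≤ K ^ |a| * x ^ a := by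
  rcases le_total 0 a with ha | ha
  · rw [abs_of_nonneg ha, ← Real.mul_rpow hK.le hx.le]
    exact Real.rpow_le_rpow hy.le h2 ha
  · rw [abs_of_nonpos ha]
    have h3 : x / K ≤ y := by rw [div_le_iff₀ hK]; linarith
    have h4 := Real.rpow_le_rpow_of_nonpos (by positivity) h3 ha
    refine h4.trans (le_of_eq ?_)
    rw [Real.div_rpow hx.le hK.le, Real.rpow_neg hK.le]
    ring

lemma lint_one_add_sq : ∃ C : ℝ≥0, ∀ x₀ : ℝ,
    ∫⁻ x : ℝ, ENNReal.ofReal (((1 + |x - x₀|) ^ 2)⁻¹) = C := by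
  have h := integrable_one_add_norm (E := ℝ) (μ := volume) (r := 2) (by simp)
  have h2 := h.lintegral_lt_top
  refine ⟨(∫⁻ x : ℝ, ENNReal.ofReal ((1 + ‖x‖) ^ (-2 : ℝ))).toNNReal, fun x₀ => ?_⟩
  rw [ENNReal.coe_toNNReal h2.ne]
  have h3 := lintegral_sub_right_eq_self (μ := volume) (fun x : ℝ => ENNReal.ofReal ((1 + ‖x‖) ^ (-2 : ℝ))) x₀
  rw [← h3]
  refine lintegral_congr fun x => ?_
  rw [Real.rpow_neg (by positivity), Real.norm_eq_abs, ← Real.rpow_natCast]; norm_num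

/-- Abstract line integral bound. -/
lemma line_abstract : ∃ C : ℝ≥0, ∀ (A : Set ℝ) (t : ℝ → ℝ),
    (∀ x ∈ A, ∀ y ∈ A, |x - y| / 2 ≤ |t x - t y|) →
    ∫⁻ x : ℝ, A.indicator (fun x => ENNReal.ofReal (((1 + |t x|) ^ 2)⁻¹)) x ≤ C := by
  obtain ⟨C, hC⟩ := lint_one_add_sq
  refine ⟨16 * C, fun A t h => ?_⟩
  rcases A.eq_empty_or_nonempty with rfl | hA
  · simp
  obtain ⟨x₀, hx₀, hmin⟩ : ∃ x₀ ∈ A, ∀ x ∈ A, |t x₀| ≤ |t x| + 1 := by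
    have hb : BddBelow ((fun x => |t x|) '' A) := ⟨0, by rintro _ ⟨x, _, rfl⟩; exact abs_nonneg _⟩
    obtain ⟨_, ⟨x₀, hx₀, rfl⟩, hlt⟩ := exists_lt_of_csInf_lt (hA.image (fun x => |t x|)) (lt_add_one (sInf ((fun x => |t x|) '' A)))
    refine ⟨x₀, hx₀, fun x hx => ?_⟩
    have := csInf_le hb ⟨x, hx, rfl⟩
    simp only at this hlt; linarith
  calc _ ≤ ∫⁻ x, 16 * ENNReal.ofReal (((1 + |x - x₀|) ^ 2)⁻¹) := by
        refine lintegral_mono fun x => ?_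
        by_cases hx : x ∈ A
        · rw [indicator_of_mem hx, show (16:ℝ≥0∞) = ENNReal.ofReal 16 by simp, ← ENNReal.ofReal_mul (by norm_num)]
          apply ENNReal.ofReal_le_ofReal
          have h1 := h x hx x₀ hx₀
          have h2 := abs_sub (t x) (t x₀)
          have h3 := hmin x hx
          rw [← div_eq_mul_inv, inv_eq_one_div, div_le_div_iff₀ (by positivity) (by positivity)]
          have : 1 + |x - x₀| ≤ 4 * (1 + |t x|) := by linarith
          nlinarith [abs_nonneg (x - x₀), abs_nonneg (t x)]
        · rw [indicator_of_notMem hx]; exact bot_le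
    _ = _ := by
        rw [lintegral_const_mul' _ _ (by simp), hC]; simp

/-- signed distance-like function -/
def tt {n : ℕ} (η p : Euc n) : ℝ := ‖p - (2:ℝ)⁻¹ • η‖ - ‖η‖ / 2

lemma tt_cont {n : ℕ} (η : Euc n) : Continuous (tt η) := by unfold tt; fun_prop

lemma tt_line {n : ℕ} (η ζ : Euc n) (hη : η ≠ 0) (x y : ℝ)
    (hx : ‖ζ + x • (‖η‖⁻¹ • η)‖ ≤ ‖η‖/8) (hy : ‖ζ + y • (‖η‖⁻¹ • η)‖ ≤ ‖η‖/8) :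
    |x - y| / 2 ≤ |tt η (ζ + x • (‖η‖⁻¹ • η)) - tt η (ζ + y • (‖η‖⁻¹ • η))| := by
  have hp : 0 < ‖η‖ := norm_pos_iff.2 hη
  set e := ‖η‖⁻¹ • η with he
  have hen : ‖e‖ = 1 := by rw [he, norm_smul, norm_inv, norm_norm, inv_mul_cancel₀ hp.ne']
  have hee : η = ‖η‖ • e := by rw [he, smul_smul, mul_inv_cancel₀ hp.ne', one_smul]
  set p := ζ + x • e with hpx
  set p' := ζ + y • e with hpy
  have h1 : tt η p - tt η p' = ‖p - (2:ℝ)⁻¹ • η‖ - ‖p' - (2:ℝ)⁻¹ • η‖ := by simp [tt]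
  rw [h1]
  set a := ‖p - (2:ℝ)⁻¹ • η‖
  set b := ‖p' - (2:ℝ)⁻¹ • η‖
  have hh : ‖(2:ℝ)⁻¹ • η‖ = ‖η‖/2 := by rw [norm_smul]; norm_num; ring
  have ha : a ≤ 5/8 * ‖η‖ := by
    have h0 : a ≤ ‖p‖ + ‖(2:ℝ)⁻¹ • η‖ := norm_sub_le _ _
    rw [hh] at h0
    linarith
  have hb : b ≤ 5/8 * ‖η‖ := by
    have h0 : b ≤ ‖p'‖ + ‖(2:ℝ)⁻¹ • η‖ := norm_sub_le _ _
    rw [hh] at h0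
    linarith
  have key : b^2 - a^2 = (x - y) * (‖η‖ - ⟪e, p⟫ - ⟪e, p'⟫) := by
    have e1 : p = p' + (x - y) • e := by rw [hpx, hpy, sub_smul]; abel
    have e2 : p - (2:ℝ)⁻¹ • η = (p' - (2:ℝ)⁻¹ • η) + (x-y) • e := by rw [e1]; abel
    have e3 : a^2 = b^2 + 2 * ((x-y) * (⟪e, p'⟫ - ‖η‖/2)) + (x-y)^2 := by
      simp only [a, b]
      rw [e2, norm_add_sq_real, inner_smul_right, norm_smul, hen, mul_one, Real.norm_eq_abs, sq_abs,
        inner_sub_left, real_inner_comm p' e]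
      have : ⟪(2:ℝ)⁻¹ • η, e⟫ = ‖η‖/2 := by
        rw [hee, smul_smul, real_inner_smul_left, real_inner_self_eq_norm_sq, hen, norm_smul, hen]
        simp; ring
      rw [this]
    have e4 : ⟪e, p⟫ = ⟪e, p'⟫ + (x - y) := by
      rw [e1, inner_add_right, inner_smul_right, real_inner_self_eq_norm_sq, hen]; ring
    rw [e3, e4]; ring
  have hip : ⟪e, p⟫ ≤ ‖η‖/8 := (real_inner_le_norm e p).trans (by rw [hen]; linarith)
  have hip' : ⟪e, p'⟫ ≤ ‖η‖/8 := (real_inner_le_norm e p').trans (by rw [hen]; linarith)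
  have ha0 : 0 ≤ a := norm_nonneg _
  have hb0 : 0 ≤ b := norm_nonneg _
  have k2 : |a - b| * (a + b) = |x - y| * (‖η‖ - ⟪e, p⟫ - ⟪e, p'⟫) := by
    have h3 : 0 ≤ ‖η‖ - ⟪e, p⟫ - ⟪e, p'⟫ := by linarith
    rw [← abs_of_nonneg (add_nonneg ha0 hb0), ← abs_mul, ← abs_of_nonneg h3, ← abs_mul, ← key, abs_sub_comm]
    ring_nf
  have k3 : |x - y| * (3/4 * ‖η‖) ≤ |x - y| * (‖η‖ - ⟪e, p⟫ - ⟪e, p'⟫) := by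
    gcongr; linarith
  have k4 : |a - b| * (a + b) ≤ |a - b| * (5/4 * ‖η‖) := by gcongr; linarith
  have k5 : |x - y| * (3/4 * ‖η‖) ≤ |a - b| * (5/4 * ‖η‖) := by linarith
  have k6 : |x - y| * (3/4) ≤ |a - b| * (5/4) := by
    by_contra hcon; push Not at hcon; nlinarith
  have := abs_nonneg (x-y)
  linarith

lemma bracket_line {n : ℕ} (s : ℝ) (hs : 0 ≤ s) (e ζ : Euc n) (he : ‖e‖ = 1) :
    ENNReal.ofReal ((1 + ‖ζ‖) ^ (-s)) ≤ ENNReal.ofReal (2 ^ (s+1)) *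
      ∫⁻ x : ℝ, ENNReal.ofReal ((1 + ‖ζ - x • e‖) ^ (-(s+1))) := by
  have h1 : ∫⁻ x in Icc (0:ℝ) (1 + ‖ζ‖), ENNReal.ofReal ((2 * (1 + ‖ζ‖)) ^ (-(s+1))) ≤
      ∫⁻ x : ℝ, ENNReal.ofReal ((1 + ‖ζ - x • e‖) ^ (-(s+1))) := by
    refine le_trans ?_ (setLIntegral_le_lintegral (Icc (0:ℝ) (1 + ‖ζ‖)) _)
    refine setLIntegral_mono' measurableSet_Icc fun x hx => ?_
    apply ENNReal.ofReal_le_ofReal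
    apply Real.rpow_le_rpow_of_nonpos (by positivity) _ (by linarith)
    have := norm_sub_le ζ (x • e)
    rw [norm_smul, he, mul_one, Real.norm_eq_abs, abs_of_nonneg hx.1] at this
    linarith [hx.2]
  refine le_trans (le_of_eq ?_) (mul_le_mul_right h1 _)
  rw [setLIntegral_const, Real.volume_Icc, ← ENNReal.ofReal_mul (by positivity), ← ENNReal.ofReal_mul (by positivity)]
  congr 1
  have hp : 0 < 1 + ‖ζ‖ := by positivity
  rw [Real.mul_rpow (by norm_num) hp.le, sub_zero]
  rw [← mul_assoc, ← mul_assoc, ← Real.rpow_add (by norm_num), add_neg_cancel, Real.rpow_zero, one_mul,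
    neg_add, Real.rpow_add hp, mul_assoc, Real.rpow_neg_one, inv_mul_cancel₀ hp.ne', mul_one]

lemma near_zero (n : ℕ) (s : ℝ) (hs0 : 0 ≤ s) (hs : (n:ℝ) - 1 < s) : ∃ C : ℝ≥0, ∀ η : Euc n, η ≠ 0 →
    ∫⁻ ζ, (Metric.closedBall (0 : Euc n) (‖η‖/8)).indicator (fun ζ => ENNReal.ofReal (((1 + |tt η ζ|) ^ 2)⁻¹)) ζ
      * ENNReal.ofReal ((1 + ‖ζ‖) ^ (-s)) ≤ C := by
  obtain ⟨C1, hC1⟩ := line_abstract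
  have hint := integrable_one_add_norm (E := Euc n) (μ := volume) (r := s+1) (by simp; linarith)
  have h2 := hint.lintegral_lt_top
  set C2 := ∫⁻ x : Euc n, ENNReal.ofReal ((1 + ‖x‖) ^ (-(s+1)))
  refine ⟨(ENNReal.ofReal (2 ^ (s+1)) * (C1 * C2)).toNNReal, fun η hη => ?_⟩
  have hfin : ENNReal.ofReal (2 ^ (s+1)) * (C1 * C2) ≠ ⊤ :=
    ENNReal.mul_ne_top (by simp) (ENNReal.mul_ne_top (by simp) h2.ne)
  rw [ENNReal.coe_toNNReal hfin]
  set e := ‖η‖⁻¹ • η with he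
  have hen : ‖e‖ = 1 := by rw [he, norm_smul, norm_inv, norm_norm, inv_mul_cancel₀ (norm_ne_zero_iff.2 hη)]
  set W := (Metric.closedBall (0 : Euc n) (‖η‖/8)).indicator (fun ζ => ENNReal.ofReal (((1 + |tt η ζ|) ^ 2)⁻¹)) with hW
  have htm : Measurable (tt η) := (tt_cont η).measurable
  have hWm : Measurable W := by
    refine Measurable.indicator ?_ Metric.isClosed_closedBall.measurableSet
    fun_prop
  calc ∫⁻ ζ, W ζ * ENNReal.ofReal ((1 + ‖ζ‖) ^ (-s))
      ≤ ∫⁻ ζ, W ζ * (ENNReal.ofReal (2 ^ (s+1)) * ∫⁻ x : ℝ, ENNReal.ofReal ((1 + ‖ζ - x • e‖) ^ (-(s+1)))) := by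
        refine lintegral_mono fun ζ => ?_
        gcongr
        exact bracket_line s hs0 e ζ hen
    _ = ENNReal.ofReal (2 ^ (s+1)) * ∫⁻ ζ, ∫⁻ x : ℝ, W ζ * ENNReal.ofReal ((1 + ‖ζ - x • e‖) ^ (-(s+1))) := by
        rw [← lintegral_const_mul' _ _ (by simp)]
        refine lintegral_congr fun ζ => ?_
        rw [lintegral_const_mul _ (by fun_prop)]; ring
    _ = ENNReal.ofReal (2 ^ (s+1)) * ∫⁻ x : ℝ, ∫⁻ ζ, W ζ * ENNReal.ofReal ((1 + ‖ζ - x • e‖) ^ (-(s+1))) := by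
        rw [lintegral_lintegral_swap]
        refine Measurable.aemeasurable ?_
        exact (hWm.comp measurable_fst).mul (by fun_prop)
    _ = ENNReal.ofReal (2 ^ (s+1)) * ∫⁻ x : ℝ, ∫⁻ ζ, W (ζ + x • e) * ENNReal.ofReal ((1 + ‖ζ‖) ^ (-(s+1))) := by
        congr 1
        refine lintegral_congr fun x => ?_
        rw [← lintegral_add_right_eq_self _ (x • e)]
        simp
    _ = ENNReal.ofReal (2 ^ (s+1)) * ∫⁻ ζ, (∫⁻ x : ℝ, W (ζ + x • e)) * ENNReal.ofReal ((1 + ‖ζ‖) ^ (-(s+1))) := by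
        rw [lintegral_lintegral_swap]
        · congr 1
          refine lintegral_congr fun ζ => ?_
          rw [lintegral_mul_const]
          exact hWm.comp (by fun_prop)
        · refine Measurable.aemeasurable ?_
          exact (hWm.comp (by fun_prop)).mul (by fun_prop)
    _ ≤ ENNReal.ofReal (2 ^ (s+1)) * ∫⁻ ζ : Euc n, C1 * ENNReal.ofReal ((1 + ‖ζ‖) ^ (-(s+1))) := by
        gcongr with ζ
        have := hC1 {x | ‖ζ + x • e‖ ≤ ‖η‖/8} (fun x => tt η (ζ + x • e))
          (fun x hx y hy => tt_line η ζ hη x y hx hy)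
        refine le_trans (le_of_eq ?_) this
        refine lintegral_congr fun x => ?_
        simp only [hW, indicator, Metric.mem_closedBall, dist_zero_right]
        rfl
    _ = _ := by rw [lintegral_const_mul' _ _ (by simp)]

lemma shell_bound (n : ℕ) (hn : 2 ≤ n) : ∃ C : ℝ≥0, ∀ η : Euc n,
    ∫⁻ ζ, (Metric.closedBall ((2:ℝ)⁻¹ • η) (4 * ‖η‖)).indicator
      (fun ζ => ENNReal.ofReal (((1 + |tt η ζ|) ^ 2)⁻¹)) ζ ≤ C * ENNReal.ofReal (‖η‖ ^ (n-1)) := by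
  obtain ⟨C1, hC1⟩ := lint_one_add_sq
  have : Nonempty (Fin n) := ⟨⟨0, by omega⟩⟩
  have hT : (volume : Measure (Euc n)).toSphere univ ≠ ⊤ := measure_ne_top _ _
  refine ⟨4 ^ (n-1) * C1 * ((volume : Measure (Euc n)).toSphere univ).toNNReal, fun η => ?_⟩
  set g : Euc n → ℝ≥0∞ := fun x => (Metric.closedBall (0 : Euc n) (4 * ‖η‖)).indicator
    (fun x => ENNReal.ofReal (((1 + |‖x‖ - ‖η‖/2|) ^ 2)⁻¹)) x with hg
  have hgm : Measurable g := by
    refine Measurable.indicator ?_ Metric.isClosed_closedBall.measurableSet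
    fun_prop
  have h1 : ∫⁻ ζ, (Metric.closedBall ((2:ℝ)⁻¹ • η) (4 * ‖η‖)).indicator
      (fun ζ => ENNReal.ofReal (((1 + |tt η ζ|) ^ 2)⁻¹)) ζ = ∫⁻ x, g x := by
    rw [← lintegral_add_right_eq_self _ ((2:ℝ)⁻¹ • η)]
    refine lintegral_congr fun x => ?_
    simp [hg, indicator, tt]
  rw [h1, ← polar_lintegral n hn g hgm]
  calc _ ≤ ∫⁻ θ : Metric.sphere (0 : Euc n) 1, ENNReal.ofReal ((4 * ‖η‖)^(n-1)) * C1 ∂(volume : Measure (Euc n)).toSphere := by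
        refine lintegral_mono fun θ => ?_
        simp only
        rw [← hC1 (‖η‖/2), ← lintegral_const_mul' _ _ ENNReal.ofReal_ne_top]
        refine le_trans ?_ (setLIntegral_le_lintegral (Ioi 0) _)
        refine setLIntegral_mono' measurableSet_Ioi fun r hr => ?_
        have hr0 : 0 < r := hr
        have hnr : ‖r • (θ : Euc n)‖ = r := by rw [norm_smul]; simp [abs_of_pos hr0]
        by_cases hh : r ≤ 4 * ‖η‖
        · have : g (r • (θ : Euc n)) = ENNReal.ofReal (((1 + |r - ‖η‖/2|) ^ 2)⁻¹) := by
            simp only [hg]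
            rw [indicator_of_mem (by simpa [hnr] using hh), hnr]
          rw [this]
          gcongr
        · have : g (r • (θ : Euc n)) = 0 := by
            simp only [hg]
            rw [indicator_of_notMem (by simpa [hnr] using hh)]
          rw [this]; simp
    _ = _ := by
        rw [lintegral_const]
        push_cast
        rw [ENNReal.coe_toNNReal hT, mul_pow, ENNReal.ofReal_mul (by positivity)]
        have : ENNReal.ofReal (4 ^ (n-1)) = 4 ^ (n-1) := by
          rw [ENNReal.ofReal_pow (by norm_num)]; simp
        rw [this]; ring

lemma weight_bound (n : ℕ) (hn : 2 ≤ n) (s : ℝ) (hs : (n:ℝ) - 1 < s) : ∃ C : ℝ≥0, ∀ η : Euc n, 1 ≤ ‖η‖ →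
    ∫⁻ ζ, (Metric.closedBall (0 : Euc n) (3 * ‖η‖)).indicator (fun ζ => ENNReal.ofReal (((1 + |tt η ζ|) ^ 2)⁻¹)) ζ
      * ENNReal.ofReal ((1 + ‖ζ‖) ^ (-s)) ≤ C := by
  have hn' : (2:ℝ) ≤ n := by exact_mod_cast hn
  have hs0 : 0 ≤ s := by linarith
  obtain ⟨C1, hC1⟩ := near_zero n s hs0 hs
  obtain ⟨C2, hC2⟩ := shell_bound n hn
  refine ⟨C1 + C2 * (8 ^ s : ℝ).toNNReal, fun η hη => ?_⟩
  have hη0 : η ≠ 0 := by rintro rfl; simp at hη; linarith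
  have htm : Measurable (tt η) := (tt_cont η).measurable
  calc _ ≤ ∫⁻ ζ, ((Metric.closedBall (0 : Euc n) (‖η‖/8)).indicator (fun ζ => ENNReal.ofReal (((1 + |tt η ζ|) ^ 2)⁻¹)) ζ
      * ENNReal.ofReal ((1 + ‖ζ‖) ^ (-s)) + (Metric.closedBall ((2:ℝ)⁻¹ • η) (4 * ‖η‖)).indicator
      (fun ζ => ENNReal.ofReal (((1 + |tt η ζ|) ^ 2)⁻¹)) ζ * ENNReal.ofReal ((‖η‖/8)^(-s))) := by
        refine lintegral_mono fun ζ => ?_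
        simp only
        by_cases h3 : ‖ζ‖ ≤ 3 * ‖η‖
        · by_cases h8 : ‖ζ‖ ≤ ‖η‖/8
          · rw [indicator_of_mem (by simpa using h3), indicator_of_mem (by simpa using h8)]
            exact le_self_add
          · push Not at h8
            have hm : ζ ∈ Metric.closedBall ((2:ℝ)⁻¹ • η) (4 * ‖η‖) := by
              rw [mem_closedBall_iff_norm]
              have := norm_sub_le ζ ((2:ℝ)⁻¹ • η)
              have hh : ‖(2:ℝ)⁻¹ • η‖ = ‖η‖/2 := by rw [norm_smul]; norm_num; ring
              linarith [norm_nonneg η]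
            rw [indicator_of_mem (by simpa using h3), indicator_of_mem hm]
            refine le_trans ?_ le_add_self
            refine mul_le_mul_right (ENNReal.ofReal_le_ofReal ?_) _
            apply Real.rpow_le_rpow_of_nonpos (by positivity) (by linarith) (by linarith)
        · rw [indicator_of_notMem (by simpa using h3)]; simp
    _ ≤ C1 + (C2 * ENNReal.ofReal (‖η‖ ^ (n-1))) * ENNReal.ofReal ((‖η‖/8)^(-s)) := by
        rw [lintegral_add_left, lintegral_mul_const]
        · gcongr
          · exact hC1 η hη0
          · exact hC2 η
        · refine Measurable.indicator ?_ Metric.isClosed_closedBall.measurableSet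
          fun_prop
        · refine Measurable.mul (Measurable.indicator ?_ Metric.isClosed_closedBall.measurableSet) ?_ <;> fun_prop
    _ ≤ _ := by
        push_cast
        rw [mul_assoc, ← ENNReal.ofReal_mul (by positivity)]
        gcongr
        change _ ≤ ENNReal.ofReal _
        apply ENNReal.ofReal_le_ofReal
        rw [Real.div_rpow (by positivity) (by norm_num), Real.rpow_neg (by norm_num : (0:ℝ) ≤ 8), div_inv_eq_mul,
          ← mul_assoc, ← Real.rpow_natCast, ← Real.rpow_add (by linarith), Nat.cast_sub (by omega)]
        have : ‖η‖ ^ (((n:ℝ) - (1:ℕ)) + -s) ≤ 1 := Real.rpow_le_one_of_one_le_of_nonpos hη (by push_cast; linarith)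
        nlinarith [Real.rpow_nonneg (show (0:ℝ) ≤ 8 by norm_num) s]

def uu {n : ℕ} (β : ℝ) (η ζ : Euc n) : ℝ≥0∞ :=
  (Metric.closedBall (0 : Euc n) (3 * ‖η‖)).indicator
    (fun ζ => ENNReal.ofReal ((1 + |tt η ζ|)⁻¹ * (1 + ‖ζ‖) ^ (-β))) ζ

lemma uu_meas {n : ℕ} (β : ℝ) (η : Euc n) : Measurable (uu β η) := by
  have htm : Measurable (tt η) := (tt_cont η).measurable
  refine Measurable.indicator ?_ Metric.isClosed_closedBall.measurableSet
  fun_prop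

lemma uu_bound (n : ℕ) (hn : 2 ≤ n) (β s : ℝ) (hs : (n:ℝ) - 1 < s) : ∃ C : ℝ≥0, ∀ η : Euc n, 1 ≤ ‖η‖ →
    ∫⁻ ζ, (uu β η ζ)^2 ≤ C * ENNReal.ofReal (‖η‖ ^ (max (s - 2 * β) 0)) := by
  obtain ⟨C1, hC1⟩ := weight_bound n hn s hs
  set p := max (s - 2 * β) 0
  have hp : 0 ≤ p := le_max_right _ _
  refine ⟨C1 * (4 ^ p : ℝ).toNNReal, fun η hη => ?_⟩
  calc _ ≤ ∫⁻ ζ, ((Metric.closedBall (0 : Euc n) (3 * ‖η‖)).indicator (fun ζ => ENNReal.ofReal (((1 + |tt η ζ|) ^ 2)⁻¹)) ζ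
      * ENNReal.ofReal ((1 + ‖ζ‖) ^ (-s))) * ENNReal.ofReal ((4 * ‖η‖)^p) := by
        refine lintegral_mono fun ζ => ?_
        simp only [uu]
        by_cases h3 : ‖ζ‖ ≤ 3 * ‖η‖
        · rw [indicator_of_mem (by simpa using h3), indicator_of_mem (by simpa using h3),
            ← ENNReal.ofReal_mul (by positivity), ← ENNReal.ofReal_mul (by positivity), ← ENNReal.ofReal_pow (by positivity)]
          apply ENNReal.ofReal_le_ofReal
          have h0 : 0 < 1 + ‖ζ‖ := by positivity
          have e1 : ((1 + ‖ζ‖) ^ (-β))^2 = (1 + ‖ζ‖)^(-s) * (1 + ‖ζ‖) ^ (s - 2*β) := by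
            rw [← Real.rpow_natCast, ← Real.rpow_mul h0.le, ← Real.rpow_add h0]
            congr 1; push_cast; ring
          rw [mul_pow, e1, inv_pow, ← mul_assoc]
          gcongr
          calc (1 + ‖ζ‖) ^ (s - 2*β) ≤ (1 + ‖ζ‖) ^ p :=
                Real.rpow_le_rpow_of_exponent_le (by linarith [norm_nonneg ζ]) (le_max_left _ _)
            _ ≤ _ := Real.rpow_le_rpow h0.le (by linarith) hp
        · rw [indicator_of_notMem (by simpa using h3)]; simp
    _ ≤ C1 * ENNReal.ofReal ((4 * ‖η‖)^p) := by
        rw [lintegral_mul_const' _ _ (by simp)]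
        gcongr; exact hC1 η hη
    _ = _ := by
        rw [Real.mul_rpow (by norm_num) (by positivity), ENNReal.ofReal_mul (by positivity)]
        push_cast
        rw [mul_assoc]; rfl

def kk {n : ℕ} (β : ℝ) (η ξ : Euc n) : ℝ :=
  (1 + 2 * ‖ξ - (2:ℝ)⁻¹ • η‖ / ‖η‖)⁻¹ * (1 + |tt η ξ|)⁻¹ * ((1 + ‖ξ‖) ^ (-β) * (1 + ‖η - ξ‖) ^ (-β))

lemma kk_bound {n : ℕ} (β : ℝ) (hβ : 0 ≤ β) (η ξ : Euc n) (hη : 1 ≤ ‖η‖) :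
    ENNReal.ofReal (kk β η ξ) ≤ ENNReal.ofReal (2 ^ β * ‖η‖ ^ (-β)) * (uu β η ξ + uu β η (η - ξ))
      + ENNReal.ofReal (‖η‖ ^ (-1 - 2 * β)) := by
  have hη0 : 0 < ‖η‖ := by linarith
  have hh : ‖(2:ℝ)⁻¹ • η‖ = ‖η‖/2 := by rw [norm_smul]; norm_num; ring
  have hsym0 : η - ξ - (2:ℝ)⁻¹ • η = -(ξ - (2:ℝ)⁻¹ • η) := by
    have : η = (2:ℝ)⁻¹ • η + (2:ℝ)⁻¹ • η := by rw [← add_smul]; norm_num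
    nth_rewrite 1 [this]; abel
  have hsym : ‖η - ξ - (2:ℝ)⁻¹ • η‖ = ‖ξ - (2:ℝ)⁻¹ • η‖ := by rw [hsym0, norm_neg]
  have htt : tt η (η - ξ) = tt η ξ := by unfold tt; rw [hsym]
  have hr1 : (1 + 2 * ‖ξ - (2:ℝ)⁻¹ • η‖ / ‖η‖)⁻¹ ≤ 1 := by
    apply inv_le_one_of_one_le₀
    have : 0 ≤ 2 * ‖ξ - (2:ℝ)⁻¹ • η‖ / ‖η‖ := by positivity
    linarith
  have hk1 : kk β η ξ ≤ (1 + |tt η ξ|)⁻¹ * ((1 + ‖ξ‖) ^ (-β) * (1 + ‖η - ξ‖) ^ (-β)) := by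
    unfold kk
    rw [mul_assoc]
    exact mul_le_of_le_one_left (by positivity) hr1
  refine (ENNReal.ofReal_le_ofReal hk1).trans ?_
  have hb : ∀ x : ℝ, ‖η‖/2 ≤ x → (1 + x) ^ (-β) ≤ 2 ^ β * ‖η‖ ^ (-β) := by
    intro x hx
    have : 2 ^ β * ‖η‖ ^ (-β) = (‖η‖/2)^(-β) := by
      rw [Real.div_rpow hη0.le (by norm_num), Real.rpow_neg (by norm_num : (0:ℝ) ≤ 2), div_inv_eq_mul, mul_comm]
    rw [this]
    exact Real.rpow_le_rpow_of_nonpos (by positivity) (by linarith) (by linarith)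
  by_cases hnear : ‖ξ - (2:ℝ)⁻¹ • η‖ ≤ 2 * ‖η‖
  · have h1 : ‖ξ‖ ≤ 3 * ‖η‖ := by
      have := norm_le_norm_sub_add ξ ((2:ℝ)⁻¹ • η); linarith
    have h2 : ‖η - ξ‖ ≤ 3 * ‖η‖ := by
      have := norm_le_norm_sub_add (η - ξ) ((2:ℝ)⁻¹ • η); linarith
    have hsum : ‖η‖ ≤ ‖ξ‖ + ‖η - ξ‖ := by
      have := norm_add_le ξ (η - ξ); simpa using this
    have hu1 : uu β η ξ = ENNReal.ofReal ((1 + |tt η ξ|)⁻¹ * (1 + ‖ξ‖) ^ (-β)) :=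
      indicator_of_mem (by simpa using h1) _
    have hu2 : uu β η (η - ξ) = ENNReal.ofReal ((1 + |tt η ξ|)⁻¹ * (1 + ‖η - ξ‖) ^ (-β)) := by
      have := indicator_of_mem (s := Metric.closedBall (0 : Euc n) (3 * ‖η‖)) (a := η - ξ) (by simpa using h2)
        (fun ζ => ENNReal.ofReal ((1 + |tt η ζ|)⁻¹ * (1 + ‖ζ‖) ^ (-β)))
      simp only [htt] at this
      exact this
    refine le_trans ?_ le_self_add
    rw [hu1, hu2, ← ENNReal.ofReal_add (by positivity) (by positivity), ← ENNReal.ofReal_mul (by positivity)]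
    apply ENNReal.ofReal_le_ofReal
    have hT : 0 ≤ (1 + |tt η ξ|)⁻¹ := by positivity
    have hA : 0 ≤ 2 ^ β * ‖η‖ ^ (-β) := by positivity
    have hx : 0 ≤ (1 + ‖ξ‖) ^ (-β) := by positivity
    have hy : 0 ≤ (1 + ‖η - ξ‖) ^ (-β) := by positivity
    rcases le_total (‖η‖/2) ‖ξ‖ with h | h
    · have := mul_le_mul_of_nonneg_right (hb _ h) (mul_nonneg hT hy)
      nlinarith [mul_nonneg hA (mul_nonneg hT hx)]
    · have := mul_le_mul_of_nonneg_right (hb ‖η - ξ‖ (by linarith)) (mul_nonneg hT hx)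
      nlinarith [mul_nonneg hA (mul_nonneg hT hy)]
  · push Not at hnear
    have h1 : ‖η‖ ≤ ‖ξ‖ := by
      have := norm_sub_le ξ ((2:ℝ)⁻¹ • η); linarith
    have h2 : ‖η‖ ≤ ‖η - ξ‖ := by
      have := norm_sub_le (η - ξ) ((2:ℝ)⁻¹ • η); linarith
    have h3 : ‖η‖ ≤ |tt η ξ| := by
      refine le_trans ?_ (le_abs_self _); unfold tt; linarith
    refine le_trans ?_ le_add_self
    apply ENNReal.ofReal_le_ofReal
    have e : ‖η‖ ^ (-1 - 2 * β) = ‖η‖⁻¹ * (‖η‖ ^ (-β) * ‖η‖ ^ (-β)) := by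
      rw [← Real.rpow_neg_one, ← Real.rpow_add hη0, ← Real.rpow_add hη0]; congr 1; ring
    rw [e]
    have g1 : (1 + ‖ξ‖) ^ (-β) ≤ ‖η‖ ^ (-β) := Real.rpow_le_rpow_of_nonpos hη0 (by linarith) (by linarith)
    have g2 : (1 + ‖η - ξ‖) ^ (-β) ≤ ‖η‖ ^ (-β) := Real.rpow_le_rpow_of_nonpos hη0 (by linarith) (by linarith)
    have g3 : (1 + |tt η ξ|)⁻¹ ≤ ‖η‖⁻¹ := inv_anti₀ hη0 (by linarith)
    gcongr

lemma cs_sq {X : Type*} [MeasurableSpace X] (μ : Measure X) (f g : X → ℝ≥0∞) (hf : Measurable f) (hg : Measurable g) :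
    (∫⁻ x, f x * g x ∂μ)^2 ≤ (∫⁻ x, f x ^ 2 ∂μ) * ∫⁻ x, g x ^ 2 ∂μ := by
  have := ENNReal.lintegral_mul_le_Lp_mul_Lq μ Real.HolderConjugate.two_two hf.aemeasurable hg.aemeasurable
  have h2 := pow_le_pow_left₀ bot_le this 2
  refine h2.trans (le_of_eq ?_)
  rw [mul_pow]
  simp only [← ENNReal.rpow_natCast, ← ENNReal.rpow_mul]
  norm_num

lemma sq_add_le' (a b : ℝ≥0∞) : (a + b)^2 ≤ 4 * (a^2 + b^2) := by
  rcases le_total a b with h | h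
  · calc (a+b)^2 ≤ (b+b)^2 := by gcongr
      _ = 4 * b^2 := by ring
      _ ≤ _ := by gcongr; exact le_add_self
  · calc (a+b)^2 ≤ (a+a)^2 := by gcongr
      _ = 4 * a^2 := by ring
      _ ≤ _ := by gcongr; exact le_self_add

lemma jap_le {n : ℕ} (η : Euc n) (h : 1 ≤ ‖η‖) : jap η ≤ 2 * ‖η‖ := by
  unfold jap
  apply Real.sqrt_le_iff.2 ⟨by positivity, by nlinarith⟩

lemma norm_le_jap {n : ℕ} (η : Euc n) : ‖η‖ ≤ jap η := by
  unfold jap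
  apply Real.le_sqrt_of_sq_le; linarith

theorem main_conv (n : ℕ) (hn : 2 ≤ n) (β α : ℝ) (hβ : 0 ≤ β)
    (h1 : 2 * α - 2 - 2 * β + max ((n:ℝ) - 1 - 2 * β) 0 < 0) (h2 : 2 * α - 4 - 4 * β ≤ -((n:ℝ) + 1)) :
    ∃ C : ℝ≥0, ∀ E : Euc n → ℝ≥0∞, Measurable E →
      ∫⁻ η in {η : Euc n | 1 ≤ ‖η‖}, (ENNReal.ofReal (jap η ^ α) * ENNReal.ofReal (‖η‖⁻¹) *
        ∫⁻ ξ, ENNReal.ofReal (kk β η ξ) * (E ξ * E (η - ξ)))^2 ≤ C * (∫⁻ ξ, E ξ ^ 2)^2 := by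
  set ε := -(2 * α - 2 - 2 * β + max ((n:ℝ) - 1 - 2 * β) 0) with hε
  have hεp : 0 < ε := by linarith
  obtain ⟨C1, hC1⟩ := uu_bound n hn β ((n:ℝ) - 1 + ε) (by linarith)
  set p := max ((n:ℝ) - 1 + ε - 2 * β) 0 with hp
  have hpexp : 2 * α - 2 - 2 * β + p ≤ 0 := by
    have : p ≤ max ((n:ℝ) - 1 - 2 * β) 0 + ε := by
      apply max_le
      · linarith [le_max_left ((n:ℝ) - 1 - 2 * β) 0]
      · linarith [le_max_right ((n:ℝ) - 1 - 2 * β) 0]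
    linarith
  have hint := integrable_one_add_norm (E := Euc n) (μ := volume) (r := n + 1) (by simp)
  have hJ := hint.lintegral_lt_top
  set J := ∫⁻ x : Euc n, ENNReal.ofReal ((1 + ‖x‖) ^ (-((n:ℝ) + 1)))
  set c : ℝ := 2 ^ |α| with hc
  have hcp : 0 < c := by positivity
  set D1 : ℝ≥0∞ := 16 * ENNReal.ofReal ((c * 2 ^ β)^2) * C1
  set D2 : ℝ≥0∞ := 4 * ENNReal.ofReal (c^2 * 2 ^ ((n:ℝ) + 1))
  have hD1 : D1 ≠ ⊤ := by finiteness
  have hD2 : D2 ≠ ⊤ := by finiteness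
  refine ⟨(D1 + D2 * J).toNNReal, fun E hE => ?_⟩
  rw [ENNReal.coe_toNNReal (by finiteness)]
  set N := ∫⁻ ξ, E ξ ^ 2 with hN
  set Q : Euc n → ℝ≥0∞ := fun η => ∫⁻ ξ, E ξ ^ 2 * E (η - ξ) ^ 2 with hQ
  have hQm : Measurable (fun z : Euc n × Euc n => E z.2 ^ 2 * E (z.1 - z.2) ^ 2) := by fun_prop
  have hQint : ∫⁻ η, Q η = N ^ 2 := by
    simp only [hQ]
    rw [lintegral_lintegral_swap hQm.aemeasurable]
    have : ∀ ξ : Euc n, ∫⁻ η, E ξ ^ 2 * E (η - ξ) ^ 2 = E ξ ^ 2 * N := fun ξ => by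
      rw [lintegral_const_mul _ (by fun_prop), lintegral_sub_right_eq_self (fun x => E x ^ 2)]
    simp only [this]
    rw [lintegral_mul_const _ (by fun_prop), sq]
  have hpt : ∀ η ∈ {η : Euc n | 1 ≤ ‖η‖}, (ENNReal.ofReal (jap η ^ α) * ENNReal.ofReal (‖η‖⁻¹) *
        ∫⁻ ξ, ENNReal.ofReal (kk β η ξ) * (E ξ * E (η - ξ)))^2 ≤
        D1 * Q η + D2 * ENNReal.ofReal ((1 + ‖η‖) ^ (-((n:ℝ) + 1))) * N^2 := by
    intro η hη
    have hη : 1 ≤ ‖η‖ := hη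
    have hη0 : 0 < ‖η‖ := by linarith
    set W := ENNReal.ofReal (c * ‖η‖ ^ (α - 1)) with hW
    set A := ENNReal.ofReal (2 ^ β * ‖η‖ ^ (-β)) with hA
    set B := ENNReal.ofReal (‖η‖ ^ (-1 - 2 * β)) with hB
    have hum := uu_meas β η
    have hw : ENNReal.ofReal (jap η ^ α) * ENNReal.ofReal (‖η‖⁻¹) ≤ W := by
      rw [← ENNReal.ofReal_mul (by unfold jap; positivity), hW]
      apply ENNReal.ofReal_le_ofReal
      have := rpow_compare α hη0 (K := 2) (by linarith [norm_le_jap η, norm_nonneg η]) (jap_le η hη)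
        (hη0.trans_le (norm_le_jap η)) (by norm_num)
      rw [sub_eq_add_neg, Real.rpow_add hη0, Real.rpow_neg_one, ← mul_assoc]
      gcongr
    have hI : ∫⁻ ξ, ENNReal.ofReal (kk β η ξ) * (E ξ * E (η - ξ)) ≤
        2 * A * (∫⁻ ξ, uu β η ξ * (E ξ * E (η - ξ))) + B * ∫⁻ ξ, E ξ * E (η - ξ) := by
      calc _ ≤ ∫⁻ ξ, (A * (uu β η ξ * (E ξ * E (η - ξ)) + uu β η (η - ξ) * (E ξ * E (η - ξ))) + B * (E ξ * E (η - ξ))) := by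
            refine lintegral_mono fun ξ => ?_
            refine (mul_le_mul_left (kk_bound β hβ η ξ hη) _).trans (le_of_eq ?_)
            ring
        _ = A * ((∫⁻ ξ, uu β η ξ * (E ξ * E (η - ξ))) + ∫⁻ ξ, uu β η (η - ξ) * (E ξ * E (η - ξ))) + B * ∫⁻ ξ, E ξ * E (η - ξ) := by
            rw [lintegral_add_left (by fun_prop), lintegral_const_mul _ (by fun_prop), lintegral_add_left (by fun_prop),
              lintegral_const_mul _ (by fun_prop)]
        _ = _ := by
            have : ∫⁻ ξ, uu β η (η - ξ) * (E ξ * E (η - ξ)) = ∫⁻ ξ, uu β η ξ * (E ξ * E (η - ξ)) := by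
              rw [← lintegral_sub_left_eq_self (μ := volume) (fun ξ => uu β η ξ * (E ξ * E (η - ξ))) η]
              refine lintegral_congr fun ξ => ?_
              rw [sub_sub_cancel, mul_comm (E ξ)]
            rw [this]; ring
    have hJ1 : (∫⁻ ξ, uu β η ξ * (E ξ * E (η - ξ)))^2 ≤ C1 * ENNReal.ofReal (‖η‖ ^ p) * Q η := by
      refine (cs_sq _ _ _ hum (by fun_prop)).trans ?_
      simp only [mul_pow]
      gcongr
      exact hC1 η hη
    have hJ2 : (∫⁻ ξ, E ξ * E (η - ξ))^2 ≤ N^2 := by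
      refine (cs_sq _ _ _ hE (by fun_prop)).trans (le_of_eq ?_)
      rw [lintegral_sub_left_eq_self (fun x => E x ^ 2), sq]
    calc _ ≤ (W * (2 * A * (∫⁻ ξ, uu β η ξ * (E ξ * E (η - ξ))) + B * ∫⁻ ξ, E ξ * E (η - ξ)))^2 := by
          gcongr
      _ ≤ W^2 * (4 * ((2 * A * (∫⁻ ξ, uu β η ξ * (E ξ * E (η - ξ))))^2 + (B * ∫⁻ ξ, E ξ * E (η - ξ))^2)) := by
          rw [mul_pow]; gcongr; exact sq_add_le' _ _
      _ = 16 * (W * A)^2 * (∫⁻ ξ, uu β η ξ * (E ξ * E (η - ξ)))^2 + 4 * (W * B)^2 * (∫⁻ ξ, E ξ * E (η - ξ))^2 := by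
          ring
      _ ≤ 16 * (W * A)^2 * (C1 * ENNReal.ofReal (‖η‖ ^ p) * Q η) + 4 * (W * B)^2 * N^2 := by
          gcongr
      _ = 16 * ((W * A)^2 * ENNReal.ofReal (‖η‖ ^ p)) * C1 * Q η + 4 * (W * B)^2 * N^2 := by ring
      _ ≤ _ := by
          have e1 : (W * A)^2 * ENNReal.ofReal (‖η‖ ^ p) ≤ ENNReal.ofReal ((c * 2 ^ β)^2) := by
            rw [hW, hA, ← ENNReal.ofReal_mul (by positivity), ← ENNReal.ofReal_pow (by positivity), ← ENNReal.ofReal_mul (by positivity)]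
            apply ENNReal.ofReal_le_ofReal
            have : (c * ‖η‖ ^ (α - 1) * (2 ^ β * ‖η‖ ^ (-β))) ^ 2 * ‖η‖ ^ p = (c * 2^β)^2 * ‖η‖ ^ (2 * α - 2 - 2 * β + p) := by
              have : ‖η‖ ^ (2 * α - 2 - 2 * β + p) = (‖η‖ ^ (α - 1) * ‖η‖ ^ (-β))^2 * ‖η‖^p := by
                rw [← Real.rpow_add hη0, ← Real.rpow_natCast, ← Real.rpow_mul hη0.le, ← Real.rpow_add hη0]
                congr 1; push_cast; ring
              rw [this]; ring
            rw [this]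
            exact mul_le_of_le_one_right (by positivity) (Real.rpow_le_one_of_one_le_of_nonpos hη hpexp)
          have e2 : (W * B)^2 ≤ ENNReal.ofReal (c^2 * 2 ^ ((n:ℝ) + 1)) * ENNReal.ofReal ((1 + ‖η‖) ^ (-((n:ℝ) + 1))) := by
            rw [hW, hB, ← ENNReal.ofReal_mul (by positivity), ← ENNReal.ofReal_pow (by positivity), ← ENNReal.ofReal_mul (by positivity)]
            apply ENNReal.ofReal_le_ofReal
            have : (c * ‖η‖ ^ (α - 1) * ‖η‖ ^ (-1 - 2 * β)) ^ 2 = c^2 * ‖η‖ ^ (2 * α - 4 - 4 * β) := by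
              rw [mul_assoc, mul_pow, ← Real.rpow_add hη0, ← Real.rpow_natCast (‖η‖ ^ _), ← Real.rpow_mul hη0.le]
              congr 2; push_cast; ring
            rw [this, mul_assoc]
            gcongr
            calc ‖η‖ ^ (2 * α - 4 - 4 * β) ≤ ‖η‖ ^ (-((n:ℝ)+1)) := Real.rpow_le_rpow_of_exponent_le hη h2
              _ ≤ ((1 + ‖η‖)/2) ^ (-((n:ℝ)+1)) := Real.rpow_le_rpow_of_nonpos (by positivity) (by linarith) (by linarith [Nat.cast_nonneg (α := ℝ) n])
              _ = _ := by
                rw [Real.div_rpow (by positivity) (by norm_num), Real.rpow_neg (by norm_num : (0:ℝ) ≤ 2), div_inv_eq_mul, mul_comm]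
          simp only [D1, D2]
          rw [mul_assoc (4:ℝ≥0∞) (ENNReal.ofReal (c^2 * 2 ^ ((n:ℝ) + 1)))]
          gcongr
  have hset : MeasurableSet {η : Euc n | 1 ≤ ‖η‖} := measurableSet_le (by fun_prop) (by fun_prop)
  calc _ ≤ ∫⁻ η in {η : Euc n | 1 ≤ ‖η‖}, (D1 * Q η + D2 * ENNReal.ofReal ((1 + ‖η‖) ^ (-((n:ℝ) + 1))) * N^2) :=
        setLIntegral_mono' hset hpt
    _ ≤ ∫⁻ η, (D1 * Q η + D2 * ENNReal.ofReal ((1 + ‖η‖) ^ (-((n:ℝ) + 1))) * N^2) := setLIntegral_le_lintegral _ _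
    _ = (D1 + D2 * J) * N^2 := by
        rw [lintegral_add_right _ (by fun_prop), lintegral_const_mul' _ _ hD1, hQint, lintegral_mul_const _ (by fun_prop),
          lintegral_const_mul' _ _ hD2]
        ring

lemma jap_rpow {n : ℕ} (x : Euc n) (b : ℝ) : jap x ^ b = (1 + ‖x‖^2) ^ (b/2) := by
  unfold jap
  rw [Real.sqrt_eq_rpow, ← Real.rpow_mul (by positivity)]; congr 1; ring

lemma ft_eq {n : ℕ} (q : Euc n → ℂ) (ξ : Euc n) : ft q ξ = 𝓕 q ((2 * Real.pi)⁻¹ • ξ) := by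
  rw [Real.fourier_eq']
  unfold ft
  congr 1; ext x
  rw [smul_eq_mul, inner_smul_right, real_inner_comm]
  congr 2
  push_cast
  have : (Real.pi : ℂ) ≠ 0 := by exact_mod_cast Real.pi_ne_zero
  field_simp

lemma line_deriv {n : ℕ} (F : 𝓢(Euc n, ℂ)) (p v : Euc n) (τ : ℝ) :
    HasDerivAt (fun τ : ℝ => F (p + τ • v)) (∂_{v} F (p + τ • v)) τ := by
  have h1 : HasDerivAt (fun τ : ℝ => p + τ • v) v τ := by
    simpa using ((hasDerivAt_id τ).smul_const v).const_add p
  have h2 := (F.hasFDerivAt (p + τ • v)).comp_hasDerivAt τ h1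
  exact h2

lemma M_deriv {n : ℕ} (β : ℝ) (p v : Euc n) (τ : ℝ) :
    HasDerivAt (fun τ : ℝ => (1 + ‖p + τ • v‖^2) ^ β)
      (2 * β * ⟪p + τ • v, v⟫ * (1 + ‖p + τ • v‖^2) ^ (β - 1)) τ := by
  have h1 : HasDerivAt (fun τ : ℝ => p + τ • v) v τ := by
    simpa using ((hasDerivAt_id τ).smul_const v).const_add p
  have h2 := (h1.norm_sq).const_add 1
  have h3 := h2.rpow_const (p := β) (Or.inl (by positivity))
  convert h3 using 1
  ring

lemma IP_deriv {n : ℕ} (p v : Euc n) (τ : ℝ) (hv : ‖v‖ = 1) :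
    HasDerivAt (fun τ : ℝ => ⟪p + τ • v, v⟫) 1 τ := by
  have h1 : HasDerivAt (fun τ : ℝ => p + τ • v) v τ := by
    simpa using ((hasDerivAt_id τ).smul_const v).const_add p
  have := h1.inner ℝ (hasDerivAt_const τ v)
  simpa [hv] using this

lemma ip_sq {n : ℕ} (x v : Euc n) (hv : ‖v‖ = 1) : ⟪x, v⟫^2 ≤ 1 + ‖x‖^2 := by
  have := abs_real_inner_le_norm x v
  rw [hv, mul_one] at this
  nlinarith [sq_abs ⟪x, v⟫, abs_nonneg ⟪x,v⟫, norm_nonneg x]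

/-- products with a power weight -/
lemma weight_deriv {n : ℕ} (b : ℝ) (F h : 𝓢(Euc n, ℂ)) (hF : ∀ x, F x = ((1 + ‖x‖^2) ^ b : ℝ) • h x)
    (v : Euc n) (hv : ‖v‖ = 1) (x : Euc n) :
    ‖∂_{v} F x‖ ≤ (1 + ‖x‖^2) ^ b * (2 * |b| * ‖h x‖ + ‖∂_{v} h x‖) ∧
    ‖∂_{v} (∂_{v} F) x‖ ≤ (1 + ‖x‖^2) ^ b *
      ((2 * |b| + 4 * |b| * |b-1|) * ‖h x‖ + 4 * |b| * ‖∂_{v} h x‖ + ‖∂_{v} (∂_{v} h) x‖) := by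
  have d1 : ∀ τ : ℝ, ∂_{v} F (x + τ • v) = ((1 + ‖x + τ • v‖^2) ^ b) • ∂_{v} h (x + τ • v) +
      (2 * b * ⟪x + τ • v, v⟫ * (1 + ‖x + τ • v‖^2) ^ (b - 1)) • h (x + τ • v) := by
    intro τ
    have h1 := line_deriv F x v τ
    have h2 := (M_deriv b x v τ).smul (line_deriv h x v τ)
    have e : (fun τ : ℝ => F (x + τ • v)) = fun τ : ℝ => ((1 + ‖x + τ • v‖^2) ^ b) • h (x + τ • v) := by
      ext τ; exact hF _
    rw [e] at h1
    exact h1.unique h2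
  have d2 : ∂_{v} (∂_{v} F) x = ((1 + ‖x‖^2) ^ b) • ∂_{v} (∂_{v} h) x + (2 * (2 * b * ⟪x, v⟫ * (1 + ‖x‖^2) ^ (b - 1))) • ∂_{v} h x
      + (2 * b * (1 + ‖x‖^2) ^ (b - 1) + 2 * b * ⟪x, v⟫ * (2 * (b - 1) * ⟪x, v⟫ * (1 + ‖x‖^2) ^ (b - 1 - 1))) • h x := by
    have h1 := line_deriv (∂_{v} F) x v 0
    have e : (fun τ : ℝ => ∂_{v} F (x + τ • v)) = _ := funext d1
    rw [e] at h1
    have h2 := ((M_deriv b x v 0).smul (line_deriv (∂_{v} h) x v 0)).add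
      ((((IP_deriv x v 0 hv).const_mul (2 * b)).mul (M_deriv (b-1) x v 0)).smul (line_deriv h x v 0))
    have h3 := h1.unique h2
    simp only [zero_smul, add_zero] at h3
    rw [h3]
    simp only [Pi.mul_apply, zero_smul, add_zero]
    module
  have d1' := d1 0
  simp only [zero_smul, add_zero] at d1'
  have hpos : 0 < 1 + ‖x‖^2 := by positivity
  set w := (1 + ‖x‖^2) ^ b with hw
  have hw0 : 0 < w := by positivity
  have e1 : (1 + ‖x‖^2) ^ (b-1) = w / (1 + ‖x‖^2) := by rw [Real.rpow_sub_one hpos.ne']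
  have e2 : (1 + ‖x‖^2) ^ (b-1-1) = w / (1 + ‖x‖^2)^2 := by
    rw [Real.rpow_sub_one hpos.ne', e1]; field_simp
  have hip := ip_sq x v hv
  have hip1 : |⟪x, v⟫| ≤ 1 + ‖x‖^2 := by
    rw [← sq_abs] at hip
    by_contra hcon
    push Not at hcon
    nlinarith [sq_nonneg ‖x‖]
  have hM1 : |2 * b * ⟪x, v⟫ * (1 + ‖x‖^2) ^ (b - 1)| ≤ w * (2 * |b|) := by
    rw [e1, abs_mul, abs_mul, abs_mul, abs_two, abs_of_pos (show 0 < w / (1 + ‖x‖^2) by positivity)]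
    rw [← mul_div_assoc, div_le_iff₀ hpos]
    have := abs_nonneg b
    have : 0 ≤ 2 * |b| * w := by positivity
    nlinarith
  have hM2 : |2 * b * (1 + ‖x‖^2) ^ (b - 1)| ≤ w * (2 * |b|) := by
    rw [e1, abs_mul, abs_mul, abs_two, abs_of_pos (show 0 < w / (1 + ‖x‖^2) by positivity)]
    rw [← mul_div_assoc, div_le_iff₀ hpos]
    have : 0 ≤ 2 * |b| * w := by positivity
    nlinarith [sq_nonneg ‖x‖]
  have hM3 : |2 * b * ⟪x, v⟫ * (2 * (b - 1) * ⟪x, v⟫ * (1 + ‖x‖^2) ^ (b - 1 - 1))| ≤ w * (4 * |b| * |b-1|) := by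
    have : 2 * b * ⟪x, v⟫ * (2 * (b - 1) * ⟪x, v⟫ * (1 + ‖x‖^2) ^ (b - 1 - 1)) =
        4 * b * (b-1) * (⟪x, v⟫^2 * (1 + ‖x‖^2) ^ (b - 1 - 1)) := by ring
    rw [this, e2, abs_mul, abs_mul, abs_mul, abs_of_nonneg (show 0 ≤ ⟪x, v⟫^2 * (w / (1 + ‖x‖^2)^2) by positivity)]
    have : ⟪x, v⟫^2 * (w / (1 + ‖x‖^2)^2) ≤ w := by
      rw [← mul_div_assoc, div_le_iff₀ (by positivity)]
      have : ⟪x,v⟫^2 ≤ (1 + ‖x‖^2)^2 := by nlinarith [sq_nonneg ‖x‖]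
      nlinarith
    rw [show |(4:ℝ)| = 4 by norm_num]
    calc 4 * |b| * |b-1| * (⟪x, v⟫^2 * (w / (1 + ‖x‖^2)^2)) ≤ 4 * |b| * |b-1| * w := by gcongr
      _ = _ := by ring
  constructor
  · rw [d1']
    refine (norm_add_le _ _).trans ?_
    rw [norm_smul, norm_smul, Real.norm_eq_abs, Real.norm_eq_abs, abs_of_pos hw0]
    have := mul_le_mul_of_nonneg_right hM1 (norm_nonneg (h x))
    linarith
  · rw [d2]
    refine (norm_add_le _ _).trans ?_
    refine (add_le_add_left (norm_add_le _ _) _).trans ?_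
    rw [norm_smul, norm_smul, norm_smul, Real.norm_eq_abs, Real.norm_eq_abs, Real.norm_eq_abs, abs_of_pos hw0]
    have g1 := mul_le_mul_of_nonneg_right hM1 (norm_nonneg (∂_{v} h x))
    have g2 := mul_le_mul_of_nonneg_right ((abs_add_le _ _).trans (add_le_add hM2 hM3)) (norm_nonneg (h x))
    rw [abs_mul 2, abs_two]
    linarith

lemma planch {n : ℕ} (φ : 𝓢(Euc n, ℂ)) : eLpNorm φ 2 volume = eLpNorm (𝓕⁻ φ : 𝓢(Euc n, ℂ)) 2 volume := by
  obtain ⟨g, hg⟩ : ∃ g : 𝓢(Euc n, ℂ), g = 𝓕⁻ φ := ⟨_, rfl⟩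
  have h := SchwartzMap.norm_fourier_toL2_eq g
  have e : 𝓕 g = φ := by rw [hg]; exact FourierTransform.fourier_fourierInv_eq φ
  rw [← hg]
  rw [e] at h
  have h1 : ‖φ.toLp 2 volume‖ = ENNReal.toReal (eLpNorm φ 2 volume) := SchwartzMap.norm_toLp
  have h2 : ‖g.toLp 2 volume‖ = ENNReal.toReal (eLpNorm g 2 volume) := SchwartzMap.norm_toLp
  have h3 := h1.symm.trans (h.trans h2)
  have f1 : eLpNorm φ 2 volume ≠ ⊤ := (φ.memLp 2 volume).eLpNorm_ne_top
  have f2 : eLpNorm g 2 volume ≠ ⊤ := (g.memLp 2 volume).eLpNorm_ne_top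
  rw [← ENNReal.ofReal_toReal f1, h3, ENNReal.ofReal_toReal f2]

lemma unit_basis_sum {n : ℕ} (v : Euc n) : v = ∑ i, v i • (EuclideanSpace.single i (1:ℝ) : Euc n) := by
  have := (EuclideanSpace.basisFun (Fin n) ℝ).sum_repr v
  simpa using this.symm

lemma coord_le {n : ℕ} (v : Euc n) (i : Fin n) : |v i| ≤ ‖v‖ := by
  simpa using PiLp.norm_apply_le v i

lemma lineDeriv_sum_le {n : ℕ} (F : 𝓢(Euc n, ℂ)) (v : Euc n) (hv : ‖v‖ = 1) (x : Euc n) :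
    ‖∂_{v} F x‖ ≤ ∑ i, ‖∂_{(EuclideanSpace.single i (1:ℝ) : Euc n)} F x‖ := by
  rw [SchwartzMap.lineDerivOp_apply_eq_fderiv]
  nth_rewrite 1 [unit_basis_sum v]
  rw [map_sum]
  refine (norm_sum_le _ _).trans (Finset.sum_le_sum fun i _ => ?_)
  rw [map_smul, norm_smul, SchwartzMap.lineDerivOp_apply_eq_fderiv, Real.norm_eq_abs]
  exact mul_le_of_le_one_left (norm_nonneg _) (hv ▸ coord_le v i)

lemma lineDeriv2_sum_le {n : ℕ} (F : 𝓢(Euc n, ℂ)) (v : Euc n) (hv : ‖v‖ = 1) (x : Euc n) :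
    ‖∂_{v} (∂_{v} F) x‖ ≤ ∑ i, ∑ j, ‖∂_{(EuclideanSpace.single i (1:ℝ) : Euc n)} (∂_{(EuclideanSpace.single j (1:ℝ) : Euc n)} F) x‖ := by
  refine (lineDeriv_sum_le _ v hv x).trans (Finset.sum_le_sum fun i _ => ?_)
  have e : ∂_{v} F = ∑ j, v j • ∂_{(EuclideanSpace.single j (1:ℝ) : Euc n)} F := by
    nth_rewrite 1 [unit_basis_sum v]
    rw [LineDeriv.lineDerivOp_left_sum]
    refine Finset.sum_congr rfl fun j _ => ?_
    rw [LineDeriv.lineDerivOp_left_smul]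
  rw [e, LineDeriv.lineDerivOp_sum, sum_apply]
  refine (norm_sum_le _ _).trans (Finset.sum_le_sum fun j _ => ?_)
  rw [LineDeriv.lineDerivOp_smul, smul_apply, norm_smul, Real.norm_eq_abs]
  exact mul_le_of_le_one_left (norm_nonneg _) (hv ▸ coord_le v j)

/-- the total second order size -/
def EE {n : ℕ} (h : 𝓢(Euc n, ℂ)) (x : Euc n) : ℝ :=
  ‖h x‖ + ∑ i, ‖∂_{(EuclideanSpace.single i (1:ℝ) : Euc n)} h x‖ +
    ∑ i, ∑ j, ‖∂_{(EuclideanSpace.single i (1:ℝ) : Euc n)} (∂_{(EuclideanSpace.single j (1:ℝ) : Euc n)} h) x‖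

lemma EE_cont {n : ℕ} (h : 𝓢(Euc n, ℂ)) : Continuous (EE h) := by
  unfold EE
  have : ∀ g : 𝓢(Euc n, ℂ), Continuous g := fun g => g.continuous
  refine ((this h).norm.add (continuous_finsetSum _ fun i _ => (this _).norm)).add
    (continuous_finsetSum _ fun i _ => continuous_finsetSum _ fun j _ => (this _).norm)

lemma fi_deriv {n : ℕ} (h : 𝓢(Euc n, ℂ)) (i : Fin n) (y : Euc n) :
    ‖(𝓕⁻ (∂_{(EuclideanSpace.single i (1:ℝ) : Euc n)} h) : 𝓢(Euc n, ℂ)) y‖ ≤ ‖(2 * Real.pi) • y‖ * ‖(𝓕⁻ h : 𝓢(Euc n, ℂ)) y‖ := by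
  rw [SchwartzMap.fourierInv_lineDerivOp_eq, smul_apply,
    SchwartzMap.smulLeftCLM_apply_apply (by fun_prop), norm_smul, norm_smul, norm_smul]
  have h1 : ‖(inner ℝ y (EuclideanSpace.single i (1:ℝ) : Euc n) : ℝ)‖ ≤ ‖y‖ := by
    have := coord_le y i
    simpa [EuclideanSpace.inner_single_right] using this
  have h2 : ‖-(2 * (Real.pi:ℂ) * Complex.I)‖ = ‖2 * Real.pi‖ := by simp
  rw [h2, ← mul_assoc]
  gcongr

lemma EE_norm {n : ℕ} (h : 𝓢(Euc n, ℂ)) :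
    eLpNorm (EE h) 2 volume ≤ (1 + n + n * n) * eLpNorm (fun y => (1 + ‖(2 * Real.pi) • y‖^2) • (𝓕⁻ h : 𝓢(Euc n, ℂ)) y) 2 volume := by
  have hm : ∀ g : 𝓢(Euc n, ℂ), AEStronglyMeasurable (fun x => ‖g x‖) (volume : Measure (Euc n)) :=
    fun g => g.continuous.norm.aestronglyMeasurable
  set X := eLpNorm (fun y => (1 + ‖(2 * Real.pi) • y‖^2) • (𝓕⁻ h : 𝓢(Euc n, ℂ)) y) 2 volume
  have h0 : eLpNorm (fun x => ‖h x‖) 2 volume ≤ X := by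
    rw [eLpNorm_norm, planch]
    refine eLpNorm_mono fun y => ?_
    rw [norm_smul]
    refine le_mul_of_one_le_left (norm_nonneg _) ?_
    rw [Real.norm_eq_abs, abs_of_pos (by positivity)]
    linarith [sq_nonneg ‖(2 * Real.pi) • y‖]
  have h1 : ∀ i, eLpNorm (fun x => ‖∂_{(EuclideanSpace.single i (1:ℝ) : Euc n)} h x‖) 2 volume ≤ X := by
    intro i
    rw [eLpNorm_norm, planch]
    refine eLpNorm_mono fun y => ?_
    refine (fi_deriv h i y).trans ?_
    rw [norm_smul (1 + _ : ℝ)]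
    gcongr
    rw [Real.norm_eq_abs, abs_of_pos (by positivity)]
    nlinarith [sq_nonneg (‖(2 * Real.pi) • y‖ - 1)]
  have h2 : ∀ i j, eLpNorm (fun x => ‖∂_{(EuclideanSpace.single i (1:ℝ) : Euc n)} (∂_{(EuclideanSpace.single j (1:ℝ) : Euc n)} h) x‖) 2 volume ≤ X := by
    intro i j
    rw [eLpNorm_norm, planch]
    refine eLpNorm_mono fun y => ?_
    refine (fi_deriv _ i y).trans ?_
    refine (mul_le_mul_of_nonneg_left (fi_deriv h j y) (norm_nonneg _)).trans ?_
    rw [norm_smul (1 + _ : ℝ), ← mul_assoc]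
    gcongr
    rw [Real.norm_eq_abs, abs_of_pos (by positivity)]
    nlinarith [sq_nonneg (‖(2 * Real.pi) • y‖ - 1)]
  have e : EE h = (fun x => ‖h x‖) + (∑ i, fun x => ‖∂_{(EuclideanSpace.single i (1:ℝ) : Euc n)} h x‖) +
    ∑ i, ∑ j, fun x => ‖∂_{(EuclideanSpace.single i (1:ℝ) : Euc n)} (∂_{(EuclideanSpace.single j (1:ℝ) : Euc n)} h) x‖ := by
    ext x; simp [EE]
  have m1 : AEStronglyMeasurable (∑ i, fun x => ‖∂_{(EuclideanSpace.single i (1:ℝ) : Euc n)} h x‖) (volume : Measure (Euc n)) :=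
    Finset.aestronglyMeasurable_sum _ fun i _ => hm _
  have m2 : ∀ i : Fin n, AEStronglyMeasurable (∑ j, fun x => ‖∂_{(EuclideanSpace.single i (1:ℝ) : Euc n)} (∂_{(EuclideanSpace.single j (1:ℝ) : Euc n)} h) x‖) (volume : Measure (Euc n)) :=
    fun i => Finset.aestronglyMeasurable_sum _ fun j _ => hm _
  rw [e]
  have t : (1:ℝ≥0∞) ≤ 2 := by norm_num
  calc _ ≤ eLpNorm (fun x => ‖h x‖) 2 volume + eLpNorm (∑ i, fun x => ‖∂_{(EuclideanSpace.single i (1:ℝ) : Euc n)} h x‖) 2 volume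
        + eLpNorm (∑ i, ∑ j, fun x => ‖∂_{(EuclideanSpace.single i (1:ℝ) : Euc n)} (∂_{(EuclideanSpace.single j (1:ℝ) : Euc n)} h) x‖) 2 volume := by
        refine (eLpNorm_add_le ((hm h).add m1) (Finset.aestronglyMeasurable_sum _ fun i _ => m2 i) t).trans ?_
        gcongr
        exact eLpNorm_add_le (hm h) m1 t
    _ ≤ X + ∑ i : Fin n, X + ∑ i : Fin n, ∑ j : Fin n, X := by
        gcongr
        · exact (eLpNorm_sum_le (fun i _ => hm _) t).trans (Finset.sum_le_sum fun i _ => h1 i)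
        · refine (eLpNorm_sum_le (fun i _ => m2 i) t).trans (Finset.sum_le_sum fun i _ => ?_)
          exact (eLpNorm_sum_le (fun i _ => hm _) t).trans (Finset.sum_le_sum fun j _ => h2 i j)
    _ = _ := by
        simp; ring

lemma eLpNorm_scale (n : ℕ) (c : ℝ) (hc : 0 < c) : ∃ C : ℝ≥0, ∀ G : Euc n → ℂ,
    eLpNorm (fun y => G (c • y)) 2 volume = C * eLpNorm G 2 volume := by
  refine ⟨((ENNReal.ofReal |(c ^ Module.finrank ℝ (Euc n))⁻¹|) ^ (1 / (2:ℝ≥0∞).toReal)).toNNReal, fun G => ?_⟩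
  rw [ENNReal.coe_toNNReal (ENNReal.rpow_ne_top_of_nonneg (by positivity) (by simp))]
  have hemb : MeasurableEmbedding (fun y : Euc n => c • y) := measurableEmbedding_const_smul₀ hc.ne'
  have h1 := hemb.eLpNorm_map_measure (μ := volume) (g := G) (p := 2)
  have h2 := Measure.map_addHaar_smul (volume : Measure (Euc n)) hc.ne'
  change _ = _
  rw [show (fun y => G (c • y)) = G ∘ (fun y => c • y) from rfl, ← h1]
  have h3 : Measure.map (fun y : Euc n => c • y) volume = ENNReal.ofReal |(c ^ Module.finrank ℝ (Euc n))⁻¹| • volume := h2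
  rw [h3, eLpNorm_smul_measure_of_ne_top (by simp)]
  simp

lemma EE_nonneg {n : ℕ} (h : 𝓢(Euc n, ℂ)) (x : Euc n) : 0 ≤ EE h x :=
  add_nonneg (add_nonneg (norm_nonneg _) (Finset.sum_nonneg fun _ _ => norm_nonneg _))
    (Finset.sum_nonneg fun _ _ => Finset.sum_nonneg fun _ _ => norm_nonneg _)

lemma EE_bounds {n : ℕ} (h : 𝓢(Euc n, ℂ)) (v x : Euc n) (hv : ‖v‖ = 1) :
    ‖h x‖ ≤ EE h x ∧ ‖∂_{v} h x‖ ≤ EE h x ∧ ‖∂_{v} (∂_{v} h) x‖ ≤ EE h x := by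
  have l1 := lineDeriv_sum_le h v hv x
  have l2 := lineDeriv2_sum_le h v hv x
  have s0 : 0 ≤ ‖h x‖ := norm_nonneg _
  have s1 : 0 ≤ ∑ i, ‖∂_{(EuclideanSpace.single i (1:ℝ) : Euc n)} h x‖ := Finset.sum_nonneg fun _ _ => norm_nonneg _
  have s2 : 0 ≤ ∑ i, ∑ j, ‖∂_{(EuclideanSpace.single i (1:ℝ) : Euc n)} (∂_{(EuclideanSpace.single j (1:ℝ) : Euc n)} h) x‖ :=
    Finset.sum_nonneg fun _ _ => Finset.sum_nonneg fun _ _ => norm_nonneg _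
  unfold EE
  generalize (∑ i, ‖∂_{(EuclideanSpace.single i (1:ℝ) : Euc n)} h x‖) = A at *
  generalize (∑ i, ∑ j, ‖∂_{(EuclideanSpace.single i (1:ℝ) : Euc n)} (∂_{(EuclideanSpace.single j (1:ℝ) : Euc n)} h) x‖) = B at *
  generalize ‖h x‖ = H at *
  exact ⟨by linarith, by linarith, by linarith⟩

lemma sob_pt {n : ℕ} (β b L : ℝ) (hb : b = -(β/2)) (hL : L = 1 + 2 * |b| + 4 * |b| * |b-1| + 4 * |b|)
    (F h : 𝓢(Euc n, ℂ)) (hFh : ∀ x, F x = ((1 + ‖x‖^2) ^ b : ℝ) • h x) (v x : Euc n) (hv : ‖v‖ = 1) :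
    ‖F x‖ ≤ 2 ^ |β| * L * (1 + ‖x‖) ^ (-β) * EE h x ∧ ‖∂_{v} F x‖ ≤ 2 ^ |β| * L * (1 + ‖x‖) ^ (-β) * EE h x ∧
      ‖∂_{v} (∂_{v} F) x‖ ≤ 2 ^ |β| * L * (1 + ‖x‖) ^ (-β) * EE h x := by
  obtain ⟨w1, w2⟩ := weight_deriv b F h hFh v hv x
  obtain ⟨g0, g1, g2⟩ := EE_bounds h v x hv
  have hE0 : 0 ≤ EE h x := EE_nonneg h x
  have hL0 : 0 ≤ L := by rw [hL]; positivity
  have hFx := hFh x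
  generalize EE h x = X at *
  generalize ‖∂_{v} h x‖ = H1 at *
  generalize ‖∂_{v} (∂_{v} h) x‖ = H2 at *
  generalize ‖∂_{v} F x‖ = F1 at *
  generalize ‖∂_{v} (∂_{v} F) x‖ = F2 at *
  have hw : (1 + ‖x‖^2) ^ b ≤ 2 ^ |β| * (1 + ‖x‖) ^ (-β) := by
    have := rpow_compare (x := 1 + ‖x‖) (y := jap x) (K := 2) (-β) (by positivity)
      (by have := norm_le_jap x; have : 1 ≤ jap x := by (unfold jap; rw [Real.one_le_sqrt]; linarith [sq_nonneg ‖x‖])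
          linarith)
      (by have : jap x ≤ 1 + ‖x‖ := by (unfold jap; exact Real.sqrt_le_iff.2 ⟨by positivity, by nlinarith [norm_nonneg x]⟩)
          linarith [norm_nonneg x]) (by unfold jap; positivity) (by norm_num)
    rw [abs_neg, jap_rpow] at this
    rwa [hb, ← neg_div]
  have hw0 : 0 ≤ (1 + ‖x‖^2) ^ b := by positivity
  have fin : ∀ A : ℝ, A ≤ L * X → (1 + ‖x‖^2) ^ b * A ≤ 2 ^ |β| * L * (1 + ‖x‖) ^ (-β) * X := by
    intro A hA
    calc _ ≤ (1 + ‖x‖^2) ^ b * (L * X) := by gcongr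
      _ ≤ (2 ^ |β| * (1 + ‖x‖) ^ (-β)) * (L * X) := by gcongr
      _ = _ := by ring
  have bE : 0 ≤ |b| * X := by positivity
  have bbE : 0 ≤ 4 * |b| * |b-1| * X := by positivity
  have b0 : |b| * ‖h x‖ ≤ |b| * X := by gcongr
  have b1 : |b| * H1 ≤ |b| * X := by gcongr
  have b2 : 4 * |b| * |b-1| * ‖h x‖ ≤ 4 * |b| * |b-1| * X := by gcongr
  refine ⟨?_, w1.trans (fin _ ?_), w2.trans (fin _ ?_)⟩
  · rw [hFx, norm_smul, Real.norm_eq_abs, abs_of_nonneg hw0]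
    apply fin; rw [hL]; linarith
  · rw [hL]; linarith
  · rw [hL]; linarith

lemma sch_decay {n : ℕ} (g : 𝓢(Euc n, ℂ)) (k : ℕ) : ∃ C : ℝ, ∀ x, ‖g x‖ * (1 + ‖x‖)^k ≤ C := by
  refine ⟨2 ^ k * (Finset.Iic (k, 0)).sup (fun m => SchwartzMap.seminorm ℝ m.1 m.2) g, fun x => ?_⟩
  have := SchwartzMap.one_add_le_sup_seminorm_apply (𝕜 := ℝ) (m := (k, 0)) (le_refl k) (le_refl 0) g x
  rw [norm_iteratedFDeriv_zero, mul_comm] at this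
  exact this

lemma EE_decay {n : ℕ} (h : 𝓢(Euc n, ℂ)) (k : ℕ) : ∃ C : ℝ, ∀ x, EE h x * (1 + ‖x‖)^k ≤ C := by
  obtain ⟨C0, h0⟩ := sch_decay h k
  choose C1 h1 using fun i : Fin n => sch_decay (∂_{(EuclideanSpace.single i (1:ℝ) : Euc n)} h) k
  choose C2 h2 using fun i j : Fin n => sch_decay (∂_{(EuclideanSpace.single i (1:ℝ) : Euc n)} (∂_{(EuclideanSpace.single j (1:ℝ) : Euc n)} h)) k
  refine ⟨C0 + ∑ i, C1 i + ∑ i, ∑ j, C2 i j, fun x => ?_⟩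
  unfold EE
  rw [add_mul, add_mul, Finset.sum_mul, Finset.sum_mul]
  refine add_le_add (add_le_add (h0 x) (Finset.sum_le_sum fun i _ => h1 i x)) (Finset.sum_le_sum fun i _ => ?_)
  rw [Finset.sum_mul]
  exact Finset.sum_le_sum fun j _ => h2 i j x

theorem sobolev (n : ℕ) (β : ℝ) : ∃ C : ℝ≥0, ∃ K : ℝ, 0 < K ∧ ∀ q : 𝓢(Euc n, ℂ), ∃ (F : 𝓢(Euc n, ℂ)) (E : Euc n → ℝ),
    (∀ ξ, F ξ = ft q ξ) ∧ Continuous E ∧ (∀ x, 0 ≤ E x) ∧ (∃ D : ℝ, ∀ x, E x * (1 + ‖x‖)^(n+1) ≤ D) ∧ eLpNorm E 2 volume ≤ C * wSobNorm β 2 q ∧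
    ∀ v x : Euc n, ‖v‖ = 1 → ‖F x‖ ≤ K * (1 + ‖x‖) ^ (-β) * E x ∧ ‖∂_{v} F x‖ ≤ K * (1 + ‖x‖) ^ (-β) * E x ∧
      ‖∂_{v} (∂_{v} F) x‖ ≤ K * (1 + ‖x‖) ^ (-β) * E x := by
  have hpi : 0 < 2 * Real.pi := by positivity
  obtain ⟨C1, hC1⟩ := eLpNorm_scale n (2 * Real.pi) hpi
  set b := -(β/2) with hb
  set L := 1 + 2 * |b| + 4 * |b| * |b-1| + 4 * |b| with hL
  have hb0 := abs_nonneg b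
  have hbb : 0 ≤ 4 * |b| * |b-1| := by positivity
  refine ⟨(1 + n + n * n) * (((2 * Real.pi)^n).toNNReal * C1), 2 ^ |β| * L, by positivity, fun q => ?_⟩
  set e : Euc n ≃L[ℝ] Euc n := ContinuousLinearEquiv.smulLeft (Units.mk0 ((2 * Real.pi)⁻¹) (by positivity)) with he
  have hee : ∀ x, e x = (2 * Real.pi)⁻¹ • x := fun x => rfl
  set F : 𝓢(Euc n, ℂ) := SchwartzMap.compCLMOfContinuousLinearEquiv ℂ e (𝓕 q) with hF
  have hFft : ∀ ξ, F ξ = ft q ξ := by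
    intro ξ
    rw [ft_eq, ← SchwartzMap.fourier_coe]
    rfl
  set h : 𝓢(Euc n, ℂ) := SchwartzMap.smulLeftCLM ℂ (fun x : Euc n => (1 + ‖x‖^2) ^ (β/2)) F with hh
  have hhx : ∀ x, h x = ((1 + ‖x‖^2) ^ (β/2) : ℝ) • F x := fun x =>
    SchwartzMap.smulLeftCLM_apply_apply (Function.hasTemperateGrowth_one_add_norm_sq_rpow (Euc n) (β/2)) F x
  have hFh : ∀ x, F x = ((1 + ‖x‖^2) ^ b : ℝ) • h x := by
    intro x
    rw [hhx, smul_smul, ← Real.rpow_add (by positivity), hb, neg_add_cancel, Real.rpow_zero, one_smul]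
  have hfi : ∀ y, (𝓕⁻ h : 𝓢(Euc n, ℂ)) y = ((2 * Real.pi)^n : ℝ) • besselD β q ((2 * Real.pi) • y) := by
    intro y
    rw [SchwartzMap.fourierInv_coe, Real.fourierInv_eq', besselD, smul_smul, mul_inv_cancel₀ (by positivity), one_smul]
    congr 1; ext ξ
    rw [hhx, hFft, jap_rpow, smul_eq_mul, inner_smul_right, Complex.real_smul]
    congr 2
    push_cast; ring
  refine ⟨F, EE h, hFft, EE_cont h, EE_nonneg h, EE_decay h (n+1), ?_, ?_⟩
  · refine (EE_norm h).trans ?_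
    have e1 : (fun y : Euc n => (1 + ‖(2 * Real.pi) • y‖^2) • (𝓕⁻ h : 𝓢(Euc n, ℂ)) y) =
        ((2 * Real.pi)^n : ℝ) • (fun y : Euc n => (fun x => (jap x ^ (2:ℝ) : ℝ) • besselD β q x) ((2 * Real.pi) • y)) := by
      ext y
      simp only [Pi.smul_apply]
      rw [hfi, jap_rpow, smul_smul, smul_smul, mul_comm]
      norm_num
    rw [e1, eLpNorm_const_smul, hC1 (fun x => (jap x ^ (2:ℝ) : ℝ) • besselD β q x)]
    unfold wSobNorm
    push_cast
    rw [mul_assoc, mul_assoc]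
    gcongr
    rw [← ofReal_norm, Real.norm_eq_abs, abs_of_pos (by positivity)]
    rfl
  · intro v x hv
    exact sob_pt β b L hb hL F h hFh v x hv

lemma avg_bound (N a b : ℝ) (hN : 0 < N) (hab : b - a = 1 / N) (g g' : ℝ → ℂ) (hg : ∀ u, HasDerivAt g (g' u) u)
    (hg' : Continuous g') (B : ℝ → ℝ) (hB : Continuous B) (h0 : ∀ u, ‖g u‖ ≤ B u) (h1 : ∀ u, ‖g' u‖ ≤ N * B u)
    (u : ℝ) (hu : u ∈ Icc a b) : ‖g u‖ ≤ 2 * N * ∫ v in a..b, B v := by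
  have hle : a ≤ b := by
    have : 0 < 1 / N := by positivity
    linarith
  have hB0 : ∀ v, 0 ≤ B v := fun v => (norm_nonneg _).trans (h0 v)
  have key : ∀ v ∈ Icc a b, ‖g u‖ ≤ B v + N * ∫ v in a..b, B v := by
    intro v hv
    have e : ∫ t in v..u, g' t = g u - g v :=
      intervalIntegral.integral_eq_sub_of_hasDerivAt (fun t _ => hg t) (hg'.intervalIntegrable _ _)
    have e2 : ‖∫ t in v..u, g' t‖ ≤ N * ∫ v in a..b, B v := by
      have := intervalIntegral.norm_integral_le_integral_norm_uIoc (f := g') (a := v) (b := u) (μ := volume)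
      refine this.trans ?_
      rw [← intervalIntegral.integral_const_mul, intervalIntegral.integral_of_le hle]
      have hi : IntegrableOn (fun x => N * B x) (Ioc a b) := 
        ((continuous_const.mul hB).integrableOn_Icc (a := a) (b := b)).mono_set Ioc_subset_Icc_self
      have hsub : uIoc v u ⊆ Ioc a b := by
        intro x hx
        rw [mem_uIoc] at hx
        obtain ⟨h1, h2⟩ := hv
        obtain ⟨h3, h4⟩ := hu
        rcases hx with hx | hx
        · exact ⟨by linarith [hx.1], by linarith [hx.2]⟩
        · exact ⟨by linarith [hx.1], by linarith [hx.2]⟩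
      refine (setIntegral_mono_on (g := fun x => N * B x) ?_ (hi.mono_set hsub) measurableSet_uIoc (fun x _ => h1 x)).trans ?_
      · exact (hg'.norm.intervalIntegrable v u).def'
      · exact setIntegral_mono_set hi (Eventually.of_forall fun x => mul_nonneg hN.le (hB0 x)) hsub.eventuallyLE
    calc ‖g u‖ = ‖g v + (g u - g v)‖ := by congr 1; ring
      _ ≤ ‖g v‖ + ‖g u - g v‖ := norm_add_le _ _
      _ ≤ _ := add_le_add (h0 v) (e ▸ e2)
  have := intervalIntegral.integral_mono_on (f := fun _ => ‖g u‖) (g := fun v => B v + N * ∫ v in a..b, B v) (μ := volume) hle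
    (by simp) ((hB.add continuous_const).intervalIntegrable _ _) key
  rw [intervalIntegral.integral_const, intervalIntegral.integral_add (hB.intervalIntegrable _ _) (by simp),
    intervalIntegral.integral_const, hab, smul_eq_mul, smul_eq_mul] at this
  have e3 : 1 / N * (N * ∫ v in a..b, B v) = ∫ v in a..b, B v := by field_simp
  rw [e3] at this
  have h4 : N * (1 / N * ‖g u‖) = ‖g u‖ := by field_simp
  rw [← h4]
  nlinarith

def aa (n : ℕ) (r : ℝ) : ℝ := r ^ (n-1) / (1 + r)

def hh (N : ℝ) (φ : ℝ → ℂ) (r : ℝ) : ℂ :=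
  if |1 - r| ≤ 1 / (2 * N) then (φ r - φ 1) / ((1 - r : ℝ) : ℂ) else φ r / ((1 - r : ℝ) : ℂ)

lemma aa_lip (n : ℕ) : ∃ L : ℝ, 0 ≤ L ∧ ∀ r ∈ Icc (1/2:ℝ) (3/2), |aa n r - aa n 1| ≤ L * |r - 1| := by
  have h : ContDiffOn ℝ 1 (aa n) (Icc (1/2:ℝ) (3/2)) := by
    unfold aa
    refine ContDiffOn.div (by fun_prop) (by fun_prop) fun x hx => ?_
    have := hx.1
    intro h; linarith
  obtain ⟨K, hK⟩ := h.exists_lipschitzOnWith (by simp) (convex_Icc _ _) isCompact_Icc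
  refine ⟨K, K.2, fun r hr => ?_⟩
  have := hK.dist_le_mul r hr 1 (by constructor <;> norm_num)
  simpa [Real.dist_eq] using this

def ww (n : ℕ) (N : ℝ) (M : ℝ → ℝ) (r : ℝ) : ℝ≥0∞ :=
  ENNReal.ofReal (r ^ (n-1)) * ENNReal.ofReal (M r * ((1 + r)⁻¹ * (1 + |N * (r - 1) / 2|)⁻¹))

lemma ww_meas (n : ℕ) (N : ℝ) (M : ℝ → ℝ) (hM : Continuous M) : Measurable (ww n N M) := by
  unfold ww
  have := hM.measurable
  fun_prop

lemma near_le (n : ℕ) (N : ℝ) (hN : 1 ≤ N) (M : ℝ → ℝ) (hM : Continuous M) (hM0 : ∀ r, 0 ≤ M r) :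
    ENNReal.ofReal (∫ v in (1 - 1/(2*N))..(1 + 1/(2*N)), M v) ≤
      ENNReal.ofReal (2^(n-1) * (5/2) * (5/4)) * ∫⁻ r in Ioi 0, ww n N M r := by
  have hd : 0 < 1/(2*N) := by positivity
  have hd2 : 1/(2*N) ≤ 1/2 := by
    apply one_div_le_one_div_of_le <;> linarith
  rw [intervalIntegral.integral_of_le (by linarith), ofReal_integral_eq_lintegral_ofReal
    ((hM.integrableOn_Icc).mono_set Ioc_subset_Icc_self) (Eventually.of_forall hM0),
    ← lintegral_const_mul _ (ww_meas n N M hM)]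
  refine (setLIntegral_mono' measurableSet_Ioc fun r hr => ?_).trans (lintegral_mono_set (s := Ioc (1 - 1/(2*N)) (1 + 1/(2*N))) (t := Ioi 0) fun r hr => ?_)
  · have h1 : 1/2 ≤ r := by linarith [hr.1]
    have h2 : r ≤ 3/2 := by linarith [hr.2]
    have h3 : |N * (r - 1) / 2| ≤ 1/4 := by
      have e : N * (1/(2*N)) = 1/2 := by field_simp
      rw [abs_le]
      constructor
      · have := mul_le_mul_of_nonneg_left (show -(1/(2*N)) ≤ r - 1 by linarith [hr.1]) (show 0 ≤ N by linarith)
        linarith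
      · have := mul_le_mul_of_nonneg_left (show r - 1 ≤ 1/(2*N) by linarith [hr.2]) (show 0 ≤ N by linarith)
        linarith
    unfold ww
    have hrp : (1/2:ℝ)^(n-1) ≤ r^(n-1) := pow_le_pow_left₀ (by norm_num) h1 _
    rw [← ENNReal.ofReal_mul (by positivity), ← ENNReal.ofReal_mul (by positivity)]
    apply ENNReal.ofReal_le_ofReal
    have i1 : (2/5:ℝ) ≤ (1 + r)⁻¹ := by
      rw [le_inv_comm₀ (by norm_num) (by linarith)]; linarith
    have i2 : (4/5:ℝ) ≤ (1 + |N * (r - 1) / 2|)⁻¹ := by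
      rw [le_inv_comm₀ (by norm_num) (by positivity)]; linarith
    have e : M r = 2^(n-1) * (5/2) * (5/4) * ((1/2:ℝ)^(n-1) * (M r * (2/5 * (4/5)))) := by
      have : (2:ℝ)^(n-1) * (1/2)^(n-1) = 1 := by rw [← mul_pow]; norm_num
      linear_combination (-M r) * this
    have m0 := hM0 r
    calc M r = _ := e
      _ ≤ _ := by gcongr
  · simp only [mem_Ioi]; linarith [hr.1]

lemma oneD (n : ℕ) : ∃ C : ℝ, 0 < C ∧ ∀ (N : ℝ) (ψ ψ1 ψ2 : ℝ → ℂ) (M : ℝ → ℝ), 1 ≤ N → Continuous M →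
    (∀ r, HasDerivAt ψ (ψ1 r) r) → (∀ r, HasDerivAt ψ1 (ψ2 r) r) → Continuous ψ2 →
    (∀ r, ‖ψ r‖ ≤ M r) → (∀ r, ‖ψ1 r‖ ≤ N * M r) → (∀ r, ‖ψ2 r‖ ≤ N * (N * M r)) →
    ENNReal.ofReal Real.pi * ‖(aa n 1 : ℂ) * ψ 1‖ₑ + ∫⁻ r in Ioi 0, ‖hh N (fun r => (aa n r : ℂ) * ψ r) r‖ₑ ≤
      ENNReal.ofReal (C * N) * ∫⁻ r in Ioi 0, ww n N M r := by
  obtain ⟨L, hL0, hL⟩ := aa_lip n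
  set C1 : ℝ := 2^(n-1) * (5/2) * (5/4) with hC1
  set C3 : ℝ := 2 * (3/2)^(n-1) + 2 * L with hC3
  have hC1p : 0 < C1 := by positivity
  have hC3p : 0 < C3 := by positivity
  have hpi := Real.pi_pos
  refine ⟨Real.pi * C1 + C3 * C1 + 5/2, by positivity, ?_⟩
  intro N ψ ψ1 ψ2 M hN hM d1 d2 c2 b0 b1 b2
  have hN0 : 0 < N := by linarith
  set δ := 1/(2*N) with hδ
  have hd : 0 < δ := by positivity
  have hd2 : δ ≤ 1/2 := by
    apply one_div_le_one_div_of_le <;> linarith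
  have hab : (1 + δ) - (1 - δ) = 1 / N := by rw [hδ]; field_simp; ring
  have hM0 : ∀ r, 0 ≤ M r := fun r => (norm_nonneg _).trans (b0 r)
  set m := ∫ v in (1 - δ)..(1 + δ), M v with hm
  have hm0 : 0 ≤ m := intervalIntegral.integral_nonneg (by linarith) fun u _ => hM0 u
  have c1 : Continuous ψ1 := continuous_iff_continuousAt.2 fun r => (d2 r).continuousAt
  have hnear : ENNReal.ofReal m ≤ ENNReal.ofReal C1 * ∫⁻ r in Ioi 0, ww n N M r := near_le n N hN M hM hM0
  have A1 : ‖ψ 1‖ ≤ 2 * N * m := avg_bound N _ _ hN0 hab ψ ψ1 d1 c1 M hM b0 b1 1 ⟨by linarith, by linarith⟩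
  have A2 : ∀ u ∈ Icc (1-δ) (1+δ), ‖ψ1 u‖ ≤ 2 * N * (N * m) := by
    intro u hu
    have := avg_bound N _ _ hN0 hab ψ1 ψ2 d2 c2 (fun r => N * M r) (by fun_prop) b1 b2 u hu
    rwa [intervalIntegral.integral_const_mul] at this
  have A3 : ∀ r ∈ Icc (1-δ) (1+δ), ‖ψ r - ψ 1‖ ≤ 2 * N * (N * m) * |r - 1| := by
    intro r hr
    exact (convex_Icc (1-δ) (1+δ)).norm_image_sub_le_of_norm_hasDerivWithin_le (fun x hx => (d1 x).hasDerivWithinAt) A2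
      ⟨by linarith, by linarith⟩ hr
  have aa1 : aa n 1 = 1/2 := by unfold aa; norm_num
  set J := ∫⁻ r in Ioi 0, ww n N M r with hJ
  have near : ∀ r ∈ Icc (1-δ) (1+δ), ‖hh N (fun r => (aa n r : ℂ) * ψ r) r‖ ≤ C3 * N^2 * m := by
    intro r hr
    have hr1 : |1 - r| ≤ 1/(2*N) := by
      rw [← hδ, abs_le]; exact ⟨by linarith [hr.2], by linarith [hr.1]⟩
    unfold hh
    rw [if_pos hr1, norm_div, Complex.norm_real, Real.norm_eq_abs]
    apply div_le_of_le_mul₀ (abs_nonneg _) (by positivity)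
    have e : (aa n r : ℂ) * ψ r - (aa n 1 : ℂ) * ψ 1 = (aa n r : ℂ) * (ψ r - ψ 1) + ((aa n r - aa n 1 : ℝ) : ℂ) * ψ 1 := by
      push_cast; ring
    rw [e]
    refine (norm_add_le _ _).trans ?_
    rw [norm_mul, norm_mul, Complex.norm_real, Complex.norm_real, Real.norm_eq_abs, Real.norm_eq_abs]
    have l1 := hL r ⟨by linarith [hr.1], by linarith [hr.2]⟩
    have hr0 : 0 ≤ r := by linarith [hr.1]
    have l2 : |aa n r| ≤ (3/2)^(n-1) := by
      unfold aa
      rw [abs_of_nonneg (by positivity)]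
      apply div_le_of_le_mul₀ (by positivity) (by positivity)
      have : r^(n-1) ≤ (3/2:ℝ)^(n-1) := pow_le_pow_left₀ hr0 (by linarith [hr.2]) _
      nlinarith [pow_nonneg (show (0:ℝ) ≤ 3/2 by norm_num) (n-1)]
    have l3 := A3 r hr
    rw [abs_sub_comm 1 r]
    have t1 : |aa n r| * ‖ψ r - ψ 1‖ ≤ (3/2)^(n-1) * (2 * N * (N * m) * |r - 1|) := by gcongr
    have t2 : |aa n r - aa n 1| * ‖ψ 1‖ ≤ (L * |r-1|) * (2 * N * (N * m)) := by
      gcongr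
      refine A1.trans ?_
      have : m ≤ N * m := le_mul_of_one_le_left hm0 hN
      gcongr
    refine (add_le_add t1 t2).trans (le_of_eq ?_)
    rw [hC3]; ring
  have far : ∀ r ∈ Ioi (0:ℝ), r ∉ Icc (1-δ) (1+δ) → ‖hh N (fun r => (aa n r : ℂ) * ψ r) r‖ₑ ≤ ENNReal.ofReal (5/2 * N) * ww n N M r := by
    intro r hr0 hr
    have hr0 : 0 < r := hr0
    have hr1 : δ < |1 - r| := by
      by_contra hc
      push Not at hc
      rw [abs_le] at hc
      exact hr ⟨by linarith [hc.2], by linarith [hc.1]⟩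
    have hr2 : ¬ |1 - r| ≤ 1/(2*N) := by rw [← hδ]; linarith
    unfold hh ww
    rw [if_neg hr2, ← ENNReal.ofReal_mul (by positivity), ← ENNReal.ofReal_mul (by positivity), ← ofReal_norm]
    apply ENNReal.ofReal_le_ofReal
    rw [norm_div, norm_mul, Complex.norm_real, Complex.norm_real, Real.norm_eq_abs, Real.norm_eq_abs]
    have hapos : 0 ≤ aa n r := by unfold aa; positivity
    rw [abs_of_nonneg hapos]
    have hx : 0 < |1 - r| := hd.trans hr1
    have k1 : 1 ≤ 2 * N * |1 - r| := by
      have := mul_le_mul_of_nonneg_left hr1.le (show 0 ≤ 2*N by positivity)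
      have e : 2 * N * δ = 1 := by rw [hδ]; field_simp
      linarith
    have k2 : |N * (r-1)/2| = N * |1-r| / 2 := by
      rw [abs_div, abs_mul, abs_of_pos hN0, abs_sub_comm]; norm_num
    have k3 : |1 - r|⁻¹ ≤ 5/2 * N * (1 + |N * (r-1)/2|)⁻¹ := by
      rw [k2, ← div_eq_mul_inv, inv_eq_one_div, div_le_div_iff₀ hx (by positivity)]
      linarith
    have m0 := hM0 r
    calc aa n r * ‖ψ r‖ / |1-r| = aa n r * ‖ψ r‖ * |1-r|⁻¹ := by rw [div_eq_mul_inv]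
      _ ≤ aa n r * M r * (5/2 * N * (1 + |N * (r-1)/2|)⁻¹) := by
          have := b0 r
          gcongr
      _ = _ := by unfold aa; rw [div_eq_mul_inv]; ring
  have tot : ∫⁻ r in Ioi 0, ‖hh N (fun r => (aa n r : ℂ) * ψ r) r‖ₑ ≤ ENNReal.ofReal (C3 * N * m) + ENNReal.ofReal (5/2*N) * J := by
    calc _ ≤ ∫⁻ r in Ioi 0, ((Icc (1-δ) (1+δ)).indicator (fun _ => ENNReal.ofReal (C3 * N^2 * m)) r + ENNReal.ofReal (5/2*N) * ww n N M r) := by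
          refine setLIntegral_mono' measurableSet_Ioi fun r hr => ?_
          by_cases hI : r ∈ Icc (1-δ) (1+δ)
          · rw [indicator_of_mem hI]
            refine le_add_right ?_
            rw [← ofReal_norm]
            exact ENNReal.ofReal_le_ofReal (near r hI)
          · rw [indicator_of_notMem hI, zero_add]
            exact far r hr hI
      _ = (∫⁻ r in Ioi 0, (Icc (1-δ) (1+δ)).indicator (fun _ => ENNReal.ofReal (C3 * N^2 * m)) r) + ENNReal.ofReal (5/2*N) * J := by
          rw [lintegral_add_right _ ((ww_meas n N M hM).const_mul _), lintegral_const_mul _ (ww_meas n N M hM)]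
      _ ≤ _ := by
          gcongr
          refine (setLIntegral_le_lintegral _ _).trans ?_
          rw [lintegral_indicator_const measurableSet_Icc, Real.volume_Icc, hab, ← ENNReal.ofReal_mul (by positivity)]
          apply le_of_eq; congr 1; field_simp
  have fin1 : ENNReal.ofReal Real.pi * ‖(aa n 1 : ℂ) * ψ 1‖ₑ ≤ ENNReal.ofReal (Real.pi * N * m) := by
    rw [← ofReal_norm, ← ENNReal.ofReal_mul hpi.le]
    apply ENNReal.ofReal_le_ofReal
    rw [norm_mul, Complex.norm_real, aa1]
    norm_num
    have := mul_le_mul_of_nonneg_left A1 hpi.le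
    linarith
  calc _ ≤ ENNReal.ofReal (Real.pi * N * m) + (ENNReal.ofReal (C3 * N * m) + ENNReal.ofReal (5/2*N) * J) := add_le_add fin1 tot
    _ = ENNReal.ofReal ((Real.pi + C3) * N) * ENNReal.ofReal m + ENNReal.ofReal (5/2*N) * J := by
        rw [← add_assoc, ← ENNReal.ofReal_add (by positivity) (by positivity), ← ENNReal.ofReal_mul (by positivity)]
        congr 2; ring
    _ ≤ ENNReal.ofReal ((Real.pi + C3) * N) * (ENNReal.ofReal C1 * J) + ENNReal.ofReal (5/2*N) * J := by gcongr
    _ = _ := by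
        rw [← mul_assoc, ← ENNReal.ofReal_mul (by positivity), ← add_mul, ← ENNReal.ofReal_add (by positivity) (by positivity)]
        congr 2; ring

lemma odd_zero (ε δ : ℝ) (c : ℂ) : ∫ r in {r : ℝ | ε < |1 - r| ∧ |1 - r| ≤ δ}, c / ((1 - r : ℝ) : ℂ) = 0 := by
  have hm : MeasurableSet {r : ℝ | ε < |1 - r| ∧ |1 - r| ≤ δ} := by measurability
  rw [← integral_indicator hm]
  set j := {r : ℝ | ε < |1 - r| ∧ |1 - r| ≤ δ}.indicator (fun r : ℝ => c / ((1 - r : ℝ) : ℂ)) with hj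
  have e := integral_sub_left_eq_self j (volume : Measure ℝ) 2
  have e2 : ∀ r, j (2 - r) = - j r := by
    intro r
    have k : |1 - (2 - r)| = |1 - r| := by rw [← abs_neg]; congr 1; ring
    by_cases h : r ∈ {r : ℝ | ε < |1 - r| ∧ |1 - r| ≤ δ}
    · have h' : (2 - r) ∈ {r : ℝ | ε < |1 - r| ∧ |1 - r| ≤ δ} := by
        simp only [Set.mem_ofPred_eq] at h ⊢; rwa [k]
      rw [hj, indicator_of_mem h, indicator_of_mem h', ← div_neg]
      congr 1; push_cast; ring
    · have h' : (2 - r) ∉ {r : ℝ | ε < |1 - r| ∧ |1 - r| ≤ δ} := by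
        simp only [Set.mem_ofPred_eq] at h ⊢; rwa [k]
      rw [hj, indicator_of_notMem h, indicator_of_notMem h', neg_zero]
  simp only [e2] at e
  rw [integral_neg] at e
  exact self_eq_neg.1 e.symm

lemma pv_tendsto (s : ℝ → ℂ) (N : ℝ) (hN : 1 ≤ N) (hint : IntegrableOn (hh N s) (Ioi 0)) :
    Tendsto (fun ε : ℝ => ∫ r in {r : ℝ | 0 < r ∧ ε < |1 - r|}, s r / ((1 - r : ℝ) : ℂ)) (𝓝[>] 0)
      (𝓝 (∫ r in Ioi 0, hh N s r)) := by
  set δ := 1/(2*N) with hδ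
  have hd : 0 < δ := by positivity
  have hd2 : δ ≤ 1/2 := by
    apply one_div_le_one_div_of_le <;> linarith
  have hmA : ∀ ε : ℝ, MeasurableSet {r : ℝ | 0 < r ∧ ε < |1 - r|} := fun ε => by measurability
  have hm : ∀ ε : ℝ, MeasurableSet {r : ℝ | ε < |1 - r| ∧ |1 - r| ≤ δ} := fun ε => by measurability
  have step : ∀ ε : ℝ, 0 < ε → ∫ r in {r : ℝ | 0 < r ∧ ε < |1 - r|}, s r / ((1 - r : ℝ) : ℂ) =
      ∫ r in Ioi 0, {r : ℝ | 0 < r ∧ ε < |1 - r|}.indicator (hh N s) r := by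
    intro ε hε
    have e1 : ∀ r : ℝ, s r / ((1 - r : ℝ) : ℂ) = hh N s r + {r : ℝ | |1 - r| ≤ δ}.indicator (fun r : ℝ => s 1 / ((1 - r : ℝ) : ℂ)) r := by
      intro r
      unfold hh
      by_cases h : |1 - r| ≤ δ
      · rw [if_pos h, indicator_of_mem (show r ∈ {r : ℝ | |1 - r| ≤ δ} from h)]; ring
      · rw [if_neg h, indicator_of_notMem (show r ∉ {r : ℝ | |1 - r| ≤ δ} from h)]; ring
    have hmd : MeasurableSet {r : ℝ | |1 - r| ≤ δ} := by measurability
    have hset : {r : ℝ | |1 - r| ≤ δ} ∩ {r : ℝ | 0 < r ∧ ε < |1 - r|} = {r : ℝ | ε < |1 - r| ∧ |1 - r| ≤ δ} := by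
      ext r
      simp only [Set.mem_ofPred_eq, mem_inter_iff]
      constructor
      · rintro ⟨a, b, c⟩; exact ⟨c, a⟩
      · rintro ⟨a, b⟩
        refine ⟨b, ?_, a⟩
        linarith [(abs_le.1 b).2]
    have hsub : {r : ℝ | ε < |1 - r| ∧ |1 - r| ≤ δ} ⊆ Icc (1-δ) (1+δ) := by
      rintro r ⟨_, b⟩
      obtain ⟨b1, b2⟩ := abs_le.1 b
      exact ⟨by linarith, by linarith⟩
    have hI : IntegrableOn (fun r : ℝ => s 1 / ((1 - r : ℝ) : ℂ)) {r : ℝ | ε < |1 - r| ∧ |1 - r| ≤ δ} := by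
      refine Measure.integrableOn_of_bounded (M := ‖s 1‖ / ε) ?_ ?_ ?_
      · exact ((measure_mono hsub).trans_lt (by simp)).ne
      · exact (Measurable.aestronglyMeasurable (by fun_prop))
      · refine (ae_restrict_iff' (hm ε)).2 (Eventually.of_forall fun r hr => ?_)
        rw [norm_div, Complex.norm_real, Real.norm_eq_abs]
        have := hr.1
        gcongr
    rw [setIntegral_congr_fun (hmA ε) (fun r _ => e1 r), integral_add, integral_indicator hmd,
      Measure.restrict_restrict hmd, hset, odd_zero, add_zero, integral_indicator (hmA ε), Measure.restrict_restrict (hmA ε)]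
    · congr 2
      ext r; simp only [Set.mem_ofPred_eq, mem_inter_iff, mem_Ioi]; tauto
    · exact hint.mono_set fun r hr => hr.1
    · rw [integrable_indicator_iff hmd, IntegrableOn, Measure.restrict_restrict hmd, hset]
      exact hI
  refine Tendsto.congr' (f₁ := fun ε => ∫ r in Ioi 0, {r : ℝ | 0 < r ∧ ε < |1 - r|}.indicator (hh N s) r) ?_ ?_
  · filter_upwards [self_mem_nhdsWithin] with ε hε
    exact (step ε hε).symm
  · refine tendsto_integral_filter_of_dominated_convergence (fun r => ‖hh N s r‖) ?_ ?_ hint.norm ?_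
    · exact Eventually.of_forall fun ε => hint.aestronglyMeasurable.indicator (hmA ε)
    · exact Eventually.of_forall fun ε => Eventually.of_forall fun r => norm_indicator_le_norm_self _ _
    · refine (ae_restrict_iff' measurableSet_Ioi).2 (Eventually.of_forall fun r hr => ?_)
      by_cases h1 : r = 1
      · have : hh N s r = 0 := by
          rw [h1]; unfold hh; simp
        have h2 : ∀ ε : ℝ, {r : ℝ | 0 < r ∧ ε < |1 - r|}.indicator (hh N s) r = 0 := fun ε =>
          indicator_apply_eq_zero.2 fun _ => this
        simp only [h2, this]
        exact tendsto_const_nhds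
      · have hp : 0 < |1 - r| := abs_pos.2 (sub_ne_zero.2 (Ne.symm h1))
        refine tendsto_const_nhds.congr' ?_
        filter_upwards [nhdsWithin_le_nhds (Iio_mem_nhds hp)] with ε hε
        rw [indicator_of_mem]
        exact ⟨hr, hε⟩

/-- product along a line -/
def XX {n : ℕ} (η p v : Euc n) (ρ : ℝ) (A B : 𝓢(Euc n, ℂ)) (r : ℝ) : ℂ :=
  A (p + (r * ρ) • v) * B (η - (p + (r * ρ) • v))

lemma XX_deriv {n : ℕ} (η p v : Euc n) (ρ : ℝ) (A B : 𝓢(Euc n, ℂ)) (r : ℝ) :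
    HasDerivAt (XX η p v ρ A B) ((ρ : ℂ) * (XX η p v ρ (∂_{v} A) B r - XX η p v ρ A (∂_{v} B) r)) r := by
  have hr : HasDerivAt (fun r : ℝ => r * ρ) ρ r := by simpa using (hasDerivAt_id r).mul_const ρ
  have h1 := (line_deriv A p v (r * ρ)).scomp r hr
  have h2 := (line_deriv B (η - p) v (-(r * ρ))).scomp r hr.neg
  have h3 := h1.mul h2
  have e : ∀ r : ℝ, (η - p) + (-(r * ρ)) • v = η - (p + (r * ρ) • v) := by
    intro r; rw [neg_smul]; abel
  have e2 : XX η p v ρ A B = ((fun τ : ℝ => A (p + τ • v)) ∘ fun r : ℝ => r * ρ) *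
      ((fun τ : ℝ => B (η - p + τ • v)) ∘ (-fun r : ℝ => r * ρ)) := by
    ext r
    simp only [XX, Pi.mul_apply, Function.comp, Pi.neg_apply, e]
  rw [e2]
  refine h3.congr_deriv ?_
  simp only [Function.comp, Pi.neg_apply, e, XX, Complex.real_smul]
  push_cast
  ring

lemma XX_cont {n : ℕ} (η p v : Euc n) (ρ : ℝ) (A B : 𝓢(Euc n, ℂ)) : Continuous (XX η p v ρ A B) := by
  unfold XX
  have := A.continuous
  have := B.continuous
  fun_prop

/-- the majorant -/
def MM {n : ℕ} (β K : ℝ) (E : Euc n → ℝ) (η p v : Euc n) (ρ : ℝ) (r : ℝ) : ℝ :=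
  K^2 * (((1 + ‖p + (r * ρ) • v‖) ^ (-β) * (1 + ‖η - (p + (r * ρ) • v)‖) ^ (-β)) *
    (E (p + (r * ρ) • v) * E (η - (p + (r * ρ) • v))))

lemma MM_cont {n : ℕ} (β K : ℝ) (E : Euc n → ℝ) (hE : Continuous E) (η p v : Euc n) (ρ : ℝ) :
    Continuous (MM β K E η p v ρ) := by
  unfold MM
  have h1 : Continuous fun r : ℝ => (1 + ‖p + (r * ρ) • v‖) ^ (-β) :=
    Continuous.rpow_const (by fun_prop) fun x => Or.inl (by positivity)
  have h2 : Continuous fun r : ℝ => (1 + ‖η - (p + (r * ρ) • v)‖) ^ (-β) :=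
    Continuous.rpow_const (by fun_prop) fun x => Or.inl (by positivity)
  fun_prop

def Maj {n : ℕ} (β K : ℝ) (E : Euc n → ℝ) (F : 𝓢(Euc n, ℂ)) : Prop :=
  ∀ v x : Euc n, ‖v‖ = 1 → ‖F x‖ ≤ K * (1 + ‖x‖) ^ (-β) * E x ∧ ‖∂_{v} F x‖ ≤ K * (1 + ‖x‖) ^ (-β) * E x ∧
      ‖∂_{v} (∂_{v} F) x‖ ≤ K * (1 + ‖x‖) ^ (-β) * E x

lemma XX_le {n : ℕ} (β K : ℝ) (E : Euc n → ℝ) (η p v : Euc n) (ρ : ℝ) (A B : 𝓢(Euc n, ℂ)) 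
    (hA : ∀ x, ‖A x‖ ≤ K * (1 + ‖x‖) ^ (-β) * E x) (hB : ∀ x, ‖B x‖ ≤ K * (1 + ‖x‖) ^ (-β) * E x) (r : ℝ) :
    ‖XX η p v ρ A B r‖ ≤ MM β K E η p v ρ r := by
  unfold XX MM
  rw [norm_mul]
  refine (mul_le_mul (hA _) (hB _) (norm_nonneg _) ((norm_nonneg _).trans (hA _))).trans (le_of_eq ?_)
  ring

lemma oneD_XX (n : ℕ) : ∃ C : ℝ, 0 < C ∧ ∀ (β K : ℝ) (E : Euc n → ℝ) (F : 𝓢(Euc n, ℂ)) (η p v : Euc n) (ρ N : ℝ),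
    Maj β K E F → Continuous E → ‖v‖ = 1 → 1 ≤ N → 0 ≤ ρ → 2 * ρ ≤ N →
    ENNReal.ofReal Real.pi * ‖(aa n 1 : ℂ) * XX η p v ρ F F 1‖ₑ + ∫⁻ r in Ioi 0, ‖hh N (fun r => (aa n r : ℂ) * XX η p v ρ F F r) r‖ₑ ≤
      ENNReal.ofReal (C * N) * ∫⁻ r in Ioi 0, ww n N (MM β K E η p v ρ) r := by
  obtain ⟨C, hC, h⟩ := oneD n
  refine ⟨C, hC, fun β K E F η p v ρ N hF hE hv hN hρ hρN => ?_⟩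
  have f0 : ∀ x, ‖F x‖ ≤ K * (1 + ‖x‖) ^ (-β) * E x := fun x => (hF v x hv).1
  have f1 : ∀ x, ‖∂_{v} F x‖ ≤ K * (1 + ‖x‖) ^ (-β) * E x := fun x => (hF v x hv).2.1
  have f2 : ∀ x, ‖∂_{v} (∂_{v} F) x‖ ≤ K * (1 + ‖x‖) ^ (-β) * E x := fun x => (hF v x hv).2.2
  refine h N (XX η p v ρ F F) (fun r => (ρ : ℂ) * (XX η p v ρ (∂_{v} F) F r - XX η p v ρ F (∂_{v} F) r))
    (fun r => (ρ : ℂ) * ((ρ : ℂ) * (XX η p v ρ (∂_{v} (∂_{v} F)) F r - XX η p v ρ (∂_{v} F) (∂_{v} F) r) -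
      (ρ : ℂ) * (XX η p v ρ (∂_{v} F) (∂_{v} F) r - XX η p v ρ F (∂_{v} (∂_{v} F)) r)))
    (MM β K E η p v ρ) hN (MM_cont β K E hE η p v ρ) (XX_deriv η p v ρ F F) ?_ ?_ ?_ ?_ ?_
  · intro r
    exact ((XX_deriv η p v ρ (∂_{v} F) F r).sub (XX_deriv η p v ρ F (∂_{v} F) r)).const_mul _
  · have c1 := XX_cont η p v ρ (∂_{v} (∂_{v} F)) F
    have c2 := XX_cont η p v ρ (∂_{v} F) (∂_{v} F)
    have c3 := XX_cont η p v ρ F (∂_{v} (∂_{v} F))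
    fun_prop
  · exact XX_le β K E η p v ρ F F f0 f0
  · intro r
    have a1 := XX_le β K E η p v ρ (∂_{v} F) F f1 f0 r
    have a2 := XX_le β K E η p v ρ F (∂_{v} F) f0 f1 r
    have m0 := (norm_nonneg _).trans a1
    rw [norm_mul, Complex.norm_real, Real.norm_eq_abs, abs_of_nonneg hρ]
    calc _ ≤ ρ * (MM β K E η p v ρ r + MM β K E η p v ρ r) := by
          gcongr
          exact (norm_sub_le _ _).trans (add_le_add a1 a2)
      _ = 2 * ρ * MM β K E η p v ρ r := by ring
      _ ≤ _ := by gcongr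
  · intro r
    have a1 := XX_le β K E η p v ρ (∂_{v} (∂_{v} F)) F f2 f0 r
    have a2 := XX_le β K E η p v ρ (∂_{v} F) (∂_{v} F) f1 f1 r
    have a3 := XX_le β K E η p v ρ F (∂_{v} (∂_{v} F)) f0 f2 r
    have m0 := (norm_nonneg _).trans a1
    have nρ : ‖(ρ : ℂ)‖ = ρ := by rw [Complex.norm_real, Real.norm_eq_abs, abs_of_nonneg hρ]
    have q1 : ‖(ρ : ℂ) * (XX η p v ρ (∂_{v} (∂_{v} F)) F r - XX η p v ρ (∂_{v} F) (∂_{v} F) r)‖ ≤ ρ * (MM β K E η p v ρ r + MM β K E η p v ρ r) := by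
      rw [norm_mul, nρ]
      gcongr
      exact (norm_sub_le _ _).trans (add_le_add a1 a2)
    have q2 : ‖(ρ : ℂ) * (XX η p v ρ (∂_{v} F) (∂_{v} F) r - XX η p v ρ F (∂_{v} (∂_{v} F)) r)‖ ≤ ρ * (MM β K E η p v ρ r + MM β K E η p v ρ r) := by
      rw [norm_mul, nρ]
      gcongr
      exact (norm_sub_le _ _).trans (add_le_add a2 a3)
    rw [norm_mul, nρ]
    calc _ ≤ ρ * (ρ * (MM β K E η p v ρ r + MM β K E η p v ρ r) + ρ * (MM β K E η p v ρ r + MM β K E η p v ρ r)) := by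
          gcongr
          exact (norm_sub_le _ _).trans (add_le_add q1 q2)
      _ = 2 * ρ * (2 * ρ * MM β K E η p v ρ r) := by ring
      _ ≤ _ := by gcongr

lemma fin_ww (n : ℕ) (hn : 1 ≤ n) (β K D : ℝ) (hβ : 0 ≤ β) (E : Euc n → ℝ) (hE0 : ∀ x, 0 ≤ E x) (hD : ∀ x, E x * (1 + ‖x‖)^(n+1) ≤ D)
    (η : Euc n) (hη : η ≠ 0) (N : ℝ) :
    ∃ B : ℝ≥0, ∀ v : Euc n, ‖v‖ = 1 → ∫⁻ r in Ioi 0, ww n N (MM β K E η ((2:ℝ)⁻¹ • η) v (‖η‖/2)) r ≤ B := by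
  obtain ⟨C, hC⟩ := lint_one_add_sq
  have hηp := norm_pos_iff.2 hη
  set ρ := ‖η‖/2 with hρ
  have hρ0 : 0 < ρ := by positivity
  set G := 2 + 1/ρ with hG
  have hG0 : 0 < G := by positivity
  have hD0 : 0 ≤ D := (mul_nonneg (hE0 0) (by positivity)).trans (hD 0)
  refine ⟨(K^2 * (D * G^(n+1)) * D).toNNReal * C, fun v hv => ?_⟩
  have ptw : ∀ r ∈ Ioi (0:ℝ), ww n N (MM β K E η ((2:ℝ)⁻¹ • η) v ρ) r ≤
      ENNReal.ofReal (K^2 * (D * G^(n+1)) * D) * ENNReal.ofReal (((1 + |r - 0|)^2)⁻¹) := by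
    intro r hr
    have hr : 0 < r := hr
    unfold ww MM
    set ξ := (2:ℝ)⁻¹ • η + (r * ρ) • v with hξ
    have g1 : r * ρ ≤ ‖ξ‖ + ρ := by
      have e : (r * ρ) • v = ξ - (2:ℝ)⁻¹ • η := by rw [hξ]; abel
      have := norm_sub_le ξ ((2:ℝ)⁻¹ • η)
      rw [← e, norm_smul, hv, norm_smul, Real.norm_eq_abs, abs_of_pos (by positivity)] at this
      norm_num at this
      rw [hρ]; rw [hρ] at this; linarith
    have g2 : 1 + r ≤ G * (1 + ‖ξ‖) := by
      have : r ≤ ‖ξ‖/ρ + 1 := by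
        rw [← sub_nonneg]
        have : 0 ≤ (‖ξ‖ + ρ - r * ρ) / ρ := div_nonneg (by linarith) hρ0.le
        have e : (‖ξ‖ + ρ - r * ρ) / ρ = ‖ξ‖/ρ + 1 - r := by field_simp
        linarith
      have e : G * (1 + ‖ξ‖) = 2 + 1/ρ + 2 * ‖ξ‖ + ‖ξ‖/ρ := by rw [hG]; ring
      have : 0 < 1/ρ := by positivity
      rw [e]; linarith [norm_nonneg ξ]
    have g3 : E (η - ξ) ≤ D := by
      refine le_trans ?_ (hD (η - ξ))
      exact le_mul_of_one_le_right (hE0 _) (one_le_pow₀ (by linarith [norm_nonneg (η - ξ)]))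
    have g4 : E ξ * (1+r)^(n+1) ≤ D * G^(n+1) := by
      calc E ξ * (1+r)^(n+1) ≤ E ξ * (G * (1 + ‖ξ‖))^(n+1) := by
            have := hE0 ξ
            gcongr
        _ = (E ξ * (1 + ‖ξ‖)^(n+1)) * G^(n+1) := by rw [mul_pow]; ring
        _ ≤ _ := by
            have := hD ξ
            gcongr
    have g5 : (1 + ‖ξ‖) ^ (-β) ≤ 1 := Real.rpow_le_one_of_one_le_of_nonpos (by linarith [norm_nonneg ξ]) (by linarith)
    have g6 : (1 + ‖η - ξ‖) ^ (-β) ≤ 1 := Real.rpow_le_one_of_one_le_of_nonpos (by linarith [norm_nonneg (η-ξ)]) (by linarith)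
    have g7 : (1 + r)⁻¹ ≤ 1 := inv_le_one_of_one_le₀ (by linarith)
    have g8 : (1 + |N * (r - 1) / 2|)⁻¹ ≤ 1 := inv_le_one_of_one_le₀ (by linarith [abs_nonneg (N * (r - 1) / 2)])
    have e1 := hE0 ξ
    have e2 := hE0 (η - ξ)
    rw [← ENNReal.ofReal_mul (by positivity), ← ENNReal.ofReal_mul (by positivity)]
    apply ENNReal.ofReal_le_ofReal
    rw [sub_zero, abs_of_pos hr]
    have g9 : r^(n-1) * E ξ ≤ D * G^(n+1) * ((1 + r)^2)⁻¹ := by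
      rw [← div_eq_mul_inv, le_div_iff₀ (by positivity)]
      refine le_trans ?_ g4
      have : (1+r)^(n+1) = (1+r)^(n-1) * (1+r)^2 := by rw [← pow_add]; congr 1; omega
      rw [this]
      have : r^(n-1) ≤ (1+r)^(n-1) := pow_le_pow_left₀ hr.le (by linarith) _
      calc r^(n-1) * E ξ * (1+r)^2 ≤ (1+r)^(n-1) * E ξ * (1+r)^2 := by gcongr
        _ = _ := by ring
    calc _ ≤ r^(n-1) * (K^2 * ((1 * 1) * (E ξ * E (η - ξ))) * (1 * 1)) := by gcongr
      _ = K^2 * (r^(n-1) * E ξ) * E (η - ξ) := by ring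
      _ ≤ K^2 * (D * G^(n+1) * ((1 + r)^2)⁻¹) * D := by gcongr
      _ = _ := by ring
  calc _ ≤ ∫⁻ r in Ioi 0, ENNReal.ofReal (K^2 * (D * G^(n+1)) * D) * ENNReal.ofReal (((1 + |r - 0|)^2)⁻¹) :=
        setLIntegral_mono' measurableSet_Ioi ptw
    _ ≤ ∫⁻ r, ENNReal.ofReal (K^2 * (D * G^(n+1)) * D) * ENNReal.ofReal (((1 + |r - 0|)^2)⁻¹) := setLIntegral_le_lintegral _ _
    _ = _ := by
        rw [lintegral_const_mul _ (by fun_prop), hC 0]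
        push_cast
        rfl

lemma Phi_meas {n : ℕ} (N : ℝ) (η : Euc n) (p : Euc n) (ρ : ℝ) (F : 𝓢(Euc n, ℂ)) :
    Measurable (fun z : Metric.sphere (0 : Euc n) 1 × ℝ => hh N (fun r => (aa n r : ℂ) * XX η p z.1 ρ F F r) z.2) := by
  unfold hh aa XX
  have hF := F.continuous.measurable
  refine Measurable.ite (measurableSet_le (by fun_prop) (by fun_prop)) ?_ ?_ <;> fun_prop

lemma Sr_eq (n : ℕ) (hn : 2 ≤ n) (q : Euc n → ℂ) (F : 𝓢(Euc n, ℂ)) (hF : ∀ ξ, F ξ = ft q ξ) (η : Euc n) (hη : η ≠ 0)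
    (r : ℝ) (hr : 0 < r) :
    Sr r q η = (((‖η‖/2)^(n-1) / (‖η‖/2) : ℝ) : ℂ) *
      ∫ θ : Metric.sphere (0 : Euc n) 1, (aa n r : ℂ) * XX η ((2:ℝ)⁻¹ • η) θ (‖η‖/2) F F r ∂(sphM n) := by
  have hηp := norm_pos_iff.2 hη
  unfold Sr
  rw [integral_ewaldM n hn r hr η hη, integral_const_mul, ← mul_assoc, smul_smul, Complex.real_smul]
  congr 1
  · rw [← Complex.ofReal_mul]
    congr 1
    unfold aa
    rw [mul_pow]
    have : 1 + r ≠ 0 := by positivity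
    field_simp
  · unfold XX
    simp only [hF]

def PP {n : ℕ} (q : Euc n → ℂ) (η : Euc n) : ℂ :=
  ∫ r in Ioi 0, hh (max 1 ‖η‖) (fun r => Sr r q η) r

theorem core (n : ℕ) (hn : 2 ≤ n) : ∃ C : ℝ, 0 < C ∧ ∀ (β K D : ℝ) (q : Euc n → ℂ) (F : 𝓢(Euc n, ℂ)) (E : Euc n → ℝ),
    0 ≤ β → (∀ ξ, F ξ = ft q ξ) → Continuous E → (∀ x, 0 ≤ E x) → (∀ x, E x * (1 + ‖x‖)^(n+1) ≤ D) → Maj β K E F →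
    ∀ η : Euc n, η ≠ 0 →
      IntegrableOn (hh (max 1 ‖η‖) (fun r => Sr r q η)) (Ioi 0) ∧
      ‖(Real.pi : ℂ) * Complex.I * Sr 1 q η + PP q η‖ₑ ≤
        ENNReal.ofReal ((‖η‖/2)^(n-1) / (‖η‖/2)) * (ENNReal.ofReal (C * max 1 ‖η‖) *
          ∫⁻ θ : Metric.sphere (0 : Euc n) 1, ∫⁻ r in Ioi 0, ww n (max 1 ‖η‖) (MM β K E η ((2:ℝ)⁻¹ • η) θ (‖η‖/2)) r ∂volume ∂(sphM n)) := by
  obtain ⟨C, hC, h1⟩ := oneD_XX n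
  have hfin := sphM_finite n hn
  refine ⟨C, hC, fun β K D q F E hβ hF hEc hE0 hD hM η hη => ?_⟩
  have hηp := norm_pos_iff.2 hη
  set N := max 1 ‖η‖ with hN
  have hN1 : 1 ≤ N := le_max_left _ _
  have hN2 : ‖η‖ ≤ N := le_max_right _ _
  set ρ := ‖η‖/2 with hρ
  have hρ0 : 0 < ρ := by positivity
  set p := (2:ℝ)⁻¹ • η with hp
  set c : ℝ := ρ^(n-1)/ρ with hc
  have hc0 : 0 ≤ c := by positivity
  set Φ : Metric.sphere (0 : Euc n) 1 × ℝ → ℂ := fun z => hh N (fun r => (aa n r : ℂ) * XX η p z.1 ρ F F r) z.2 with hΦ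
  have hΦm : Measurable Φ := Phi_meas N η p ρ F
  have hsph : ∀ θ : Metric.sphere (0 : Euc n) 1, ‖(θ : Euc n)‖ = 1 := fun θ => by simp
  have hone : ∀ θ : Metric.sphere (0 : Euc n) 1, ENNReal.ofReal Real.pi * ‖(aa n 1 : ℂ) * XX η p θ ρ F F 1‖ₑ +
      ∫⁻ r in Ioi 0, ‖Φ (θ, r)‖ₑ ≤ ENNReal.ofReal (C * N) * ∫⁻ r in Ioi 0, ww n N (MM β K E η p θ ρ) r := fun θ =>
    h1 β K E F η p θ ρ N hM hEc (hsph θ) hN1 hρ0.le (by rw [hρ]; linarith)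
  obtain ⟨B, hB⟩ := fin_ww n (by omega) β K D hβ E hE0 hD η hη N
  have hΦi : Integrable Φ ((sphM n).prod (volume.restrict (Ioi 0))) := by
    refine ⟨hΦm.aestronglyMeasurable, ?_⟩
    rw [hasFiniteIntegral_iff_enorm, lintegral_prod _ hΦm.enorm.aemeasurable]
    calc _ ≤ ∫⁻ θ, ENNReal.ofReal (C * N) * B ∂(sphM n) := by
          refine lintegral_mono fun θ => ?_
          refine (le_add_left le_rfl).trans ((hone θ).trans ?_)
          exact mul_le_mul_right (hB θ (hsph θ)) _
      _ < ⊤ := by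
          rw [lintegral_const]
          finiteness
  have hψi : ∀ r : ℝ, Integrable (fun θ : Metric.sphere (0 : Euc n) 1 => (aa n r : ℂ) * XX η p θ ρ F F r) (sphM n) := by
    intro r
    obtain ⟨D0, hD0⟩ := sch_decay F 0
    simp only [pow_zero, mul_one] at hD0
    refine Integrable.const_mul ?_ _
    refine Integrable.of_bound (C := D0 * D0) ?_ (Eventually.of_forall fun θ => ?_)
    · apply Measurable.aestronglyMeasurable
      unfold XX
      have := F.continuous.measurable
      fun_prop
    · unfold XX
      rw [norm_mul]
      exact mul_le_mul (hD0 _) (hD0 _) (norm_nonneg _) ((norm_nonneg _).trans (hD0 0))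
  have hs : ∀ r : ℝ, 0 < r → Sr r q η = (c : ℂ) * ∫ θ : Metric.sphere (0 : Euc n) 1, (aa n r : ℂ) * XX η p θ ρ F F r ∂(sphM n) :=
    fun r hr => Sr_eq n hn q F hF η hη r hr
  have hhs : ∀ r ∈ Ioi (0:ℝ), hh N (fun r => Sr r q η) r = (c : ℂ) * ∫ θ, Φ (θ, r) ∂(sphM n) := by
    intro r hr
    simp only [hΦ]
    unfold hh
    by_cases h : |1 - r| ≤ 1/(2*N)
    · simp only [if_pos h]
      rw [hs r hr, hs 1 one_pos, integral_div, integral_sub (hψi r) (hψi 1)]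
      ring
    · simp only [if_neg h]
      rw [hs r hr, integral_div]
      ring
  have hint : IntegrableOn (hh N (fun r => Sr r q η)) (Ioi 0) := by
    have := (hΦi.integral_prod_right).const_mul (c : ℂ)
    refine this.congr ?_
    refine (ae_restrict_iff' measurableSet_Ioi).2 (Eventually.of_forall fun r hr => (hhs r hr).symm)
  refine ⟨hint, ?_⟩
  have hcn : ‖(c : ℂ)‖ₑ = ENNReal.ofReal c := by
    rw [← ofReal_norm, Complex.norm_real, Real.norm_eq_abs, abs_of_nonneg hc0]
  have bP : ‖PP q η‖ₑ ≤ ENNReal.ofReal c * ∫⁻ θ, ∫⁻ r in Ioi 0, ‖Φ (θ, r)‖ₑ ∂volume ∂(sphM n) := by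
    unfold PP
    refine (enorm_integral_le_lintegral_enorm _).trans ?_
    calc _ ≤ ∫⁻ r in Ioi 0, ENNReal.ofReal c * ∫⁻ θ, ‖Φ (θ, r)‖ₑ ∂(sphM n) := by
          refine setLIntegral_mono' measurableSet_Ioi fun r hr => ?_
          rw [hhs r hr, enorm_mul, hcn]
          exact mul_le_mul_right (enorm_integral_le_lintegral_enorm _) _
      _ = ENNReal.ofReal c * ∫⁻ r in Ioi 0, ∫⁻ θ, ‖Φ (θ, r)‖ₑ ∂(sphM n) := by
          rw [lintegral_const_mul' _ _ ENNReal.ofReal_ne_top]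
      _ = _ := by
          congr 1
          exact (lintegral_lintegral_swap (f := fun θ r => ‖Φ (θ, r)‖ₑ) hΦm.enorm.aemeasurable).symm
  have bS : ‖(Real.pi : ℂ) * Complex.I * Sr 1 q η‖ₑ ≤ ENNReal.ofReal c * ∫⁻ θ : Metric.sphere (0 : Euc n) 1, ENNReal.ofReal Real.pi * ‖(aa n 1 : ℂ) * XX η p θ ρ F F 1‖ₑ ∂(sphM n) := by
    rw [lintegral_const_mul' _ _ ENNReal.ofReal_ne_top, hs 1 one_pos, enorm_mul, enorm_mul, enorm_mul, hcn]
    have e1 : ‖(Real.pi : ℂ)‖ₑ = ENNReal.ofReal Real.pi := by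
      rw [← ofReal_norm, Complex.norm_real, Real.norm_eq_abs, abs_of_nonneg Real.pi_pos.le]
    have e2 : ‖Complex.I‖ₑ = 1 := by rw [← ofReal_norm]; simp
    rw [e1, e2, mul_one, mul_left_comm]
    gcongr
    exact enorm_integral_le_lintegral_enorm _
  refine (enorm_add_le _ _).trans ((add_le_add bS bP).trans ?_)
  rw [← mul_add]
  refine mul_le_mul_right ?_ _
  have mS : Measurable (fun θ : Metric.sphere (0 : Euc n) 1 => ENNReal.ofReal Real.pi * ‖(aa n 1 : ℂ) * XX η p θ ρ F F 1‖ₑ) := by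
    unfold XX
    have := F.continuous.measurable
    fun_prop
  rw [← lintegral_add_left mS, ← lintegral_const_mul' _ _ ENNReal.ofReal_ne_top]
  exact lintegral_mono fun θ => hone θ

lemma ptwise (n : ℕ) (hn : 2 ≤ n) : ∃ C : ℝ≥0, ∀ (β K D : ℝ) (q : Euc n → ℂ) (F : 𝓢(Euc n, ℂ)) (E : Euc n → ℝ),
    0 ≤ β → (∀ ξ, F ξ = ft q ξ) → Continuous E → (∀ x, 0 ≤ E x) → (∀ x, E x * (1 + ‖x‖)^(n+1) ≤ D) → Maj β K E F →
    ∀ η : Euc n, 1 ≤ ‖η‖ →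
      ‖(Real.pi : ℂ) * Complex.I * Sr 1 q η + PP q η‖ₑ ≤
        C * ENNReal.ofReal (K^2) * (ENNReal.ofReal (‖η‖⁻¹) * ∫⁻ ξ, ENNReal.ofReal (kk β η ξ) * (ENNReal.ofReal (E ξ) * ENNReal.ofReal (E (η - ξ)))) := by
  obtain ⟨C, hC, h⟩ := core n hn
  obtain ⟨C2, h2⟩ := polar_le_aff n hn
  refine ⟨(4 * C).toNNReal * C2, fun β K D q F E hβ hF hEc hE0 hD hM η hη => ?_⟩
  have hηp : 0 < ‖η‖ := by linarith
  have hη0 : η ≠ 0 := norm_pos_iff.1 hηp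
  refine (h β K D q F E hβ hF hEc hE0 hD hM η hη0).2.trans ?_
  rw [max_eq_right hη]
  set g : Euc n → ℝ≥0∞ := fun ξ => ENNReal.ofReal (K^2) * (ENNReal.ofReal (kk β η ξ) * (ENNReal.ofReal (E ξ) * ENNReal.ofReal (E (η - ξ)))) with hg
  have hgi : Measurable fun ξ => ENNReal.ofReal (kk β η ξ) * (ENNReal.ofReal (E ξ) * ENNReal.ofReal (E (η - ξ))) := by
    have hE := hEc.measurable
    unfold kk tt
    fun_prop
  have hgm : Measurable g := hgi.const_mul _
  have e : ∀ θ : Metric.sphere (0 : Euc n) 1, ∀ r ∈ Ioi (0:ℝ), ww n ‖η‖ (MM β K E η ((2:ℝ)⁻¹ • η) θ (‖η‖/2)) r =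
      ENNReal.ofReal (r^(n-1)) * g ((2:ℝ)⁻¹ • η + (r * (‖η‖/2)) • (θ : Euc n)) := by
    intro θ r hr
    have hr : 0 < r := hr
    have hθ : ‖(θ : Euc n)‖ = 1 := by simp
    unfold ww MM
    simp only [hg]
    have k1 : 0 ≤ kk β η ((2:ℝ)⁻¹ • η + (r * (‖η‖/2)) • (θ : Euc n)) := by unfold kk; positivity
    rw [← ENNReal.ofReal_mul (hE0 _), ← ENNReal.ofReal_mul k1, ← ENNReal.ofReal_mul (sq_nonneg K)]
    congr 2
    unfold kk tt
    have k2 : ‖(2:ℝ)⁻¹ • η + (r * (‖η‖/2)) • (θ : Euc n) - (2:ℝ)⁻¹ • η‖ = r * (‖η‖/2) := by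
      rw [add_sub_cancel_left, norm_smul, hθ, mul_one, Real.norm_eq_abs, abs_of_pos (by positivity)]
    rw [k2]
    have k3 : 2 * (r * (‖η‖/2)) / ‖η‖ = r := by field_simp
    have k4 : r * (‖η‖/2) - ‖η‖/2 = ‖η‖ * (r - 1) / 2 := by ring
    rw [k3, k4]
    ring
  have e2 : ∫⁻ θ : Metric.sphere (0 : Euc n) 1, ∫⁻ r in Ioi 0, ww n ‖η‖ (MM β K E η ((2:ℝ)⁻¹ • η) θ (‖η‖/2)) r ∂volume ∂(sphM n) ≤
      C2 * (ENNReal.ofReal (((‖η‖/2)^n)⁻¹) * ∫⁻ ξ, g ξ) := by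
    refine le_trans (le_of_eq ?_) (h2 g ((2:ℝ)⁻¹ • η) (‖η‖/2) (by positivity) hgm)
    refine lintegral_congr fun θ => ?_
    exact setLIntegral_congr_fun measurableSet_Ioi (e θ)
  have e3 : ∫⁻ ξ, g ξ = ENNReal.ofReal (K^2) * ∫⁻ ξ, ENNReal.ofReal (kk β η ξ) * (ENNReal.ofReal (E ξ) * ENNReal.ofReal (E (η - ξ))) := by
    rw [← lintegral_const_mul _ hgi]
  rw [e3] at e2
  set I := ∫⁻ ξ, ENNReal.ofReal (kk β η ξ) * (ENNReal.ofReal (E ξ) * ENNReal.ofReal (E (η - ξ)))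
  calc _ ≤ ENNReal.ofReal ((‖η‖/2)^(n-1)/(‖η‖/2)) * (ENNReal.ofReal (C * ‖η‖) * (C2 * (ENNReal.ofReal (((‖η‖/2)^n)⁻¹) * (ENNReal.ofReal (K^2) * I)))) := by gcongr
    _ = (ENNReal.ofReal ((‖η‖/2)^(n-1)/(‖η‖/2)) * ENNReal.ofReal (C * ‖η‖) * ENNReal.ofReal (((‖η‖/2)^n)⁻¹)) * (C2 * ENNReal.ofReal (K^2) * I) := by ring
    _ = (ENNReal.ofReal (4 * C) * ENNReal.ofReal (‖η‖⁻¹)) * (C2 * ENNReal.ofReal (K^2) * I) := by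
        rw [← ENNReal.ofReal_mul (by positivity), ← ENNReal.ofReal_mul (by positivity), ← ENNReal.ofReal_mul (by positivity)]
        congr 2
        have : (‖η‖/2)^n = (‖η‖/2)^(n-1) * (‖η‖/2) := by rw [← pow_succ]; congr 1; omega
        rw [this]
        field_simp
        norm_num
    _ = _ := by
        push_cast
        change ENNReal.ofReal (4 * C) * _ * _ = ENNReal.ofReal (4 * C) * _ * _ * _
        ring

theorem stmt8_aux (n : ℕ) (hn : 2 ≤ n) (β α : ℝ) (hβ : 0 ≤ β)
    (hrange : (((n : ℝ) - 3) / 2 < β ∧ β < ((n : ℝ) - 1) / 2 ∧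
        α < 2 * β - ((n : ℝ) - 3) / 2) ∨
      (((n : ℝ) - 1) / 2 ≤ β ∧ α < β + 1))
    (C₀ : ℝ) (hC₀ : 1 ≤ C₀) (χ : Euc n → ℝ)
    (hχ01 : ∀ ξ, χ ξ ∈ Set.Icc (0 : ℝ) 1)
    (hχ0 : ∀ ξ : Euc n, ‖ξ‖ < C₀ → χ ξ = 0) :
    ∃ C : ℝ, 0 < C ∧
      ∀ q : SchwartzMap (Euc n) ℂ,
        ∃ P : Euc n → ℂ,
          (∀ η : Euc n, η ≠ 0 → Tendsto
              (fun ε : ℝ => ∫ r in {r : ℝ | 0 < r ∧ ε < |1 - r|},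
                  Sr r (⇑q) η / ((1 - r : ℝ) : ℂ))
              (nhdsWithin 0 (Set.Ioi 0)) (nhds (P η))) ∧
          eLpNorm (fun η : Euc n => (jap η ^ α : ℝ) •
              ((χ η : ℂ) * ((Real.pi : ℂ) * Complex.I * Sr 1 (⇑q) η + P η))) 2 volume
            ≤ ENNReal.ofReal C * (wSobNorm β 2 (⇑q)) ^ 2 := by
  have hn' : (2:ℝ) ≤ n := by exact_mod_cast hn
  obtain ⟨C1, K, hK, hsob⟩ := sobolev n β
  obtain ⟨C2, hpt⟩ := ptwise n hn
  obtain ⟨C3, hconv⟩ := main_conv n hn β α hβ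
    (by
      rcases hrange with ⟨a, b, c⟩ | ⟨a, b⟩
      · rw [max_eq_left (by linarith)]; linarith
      · rw [max_eq_right (by linarith)]; linarith)
    (by
      rcases hrange with ⟨a, b, c⟩ | ⟨a, b⟩
      · linarith
      · linarith)
  obtain ⟨_, _, hcore⟩ := core n hn
  set G : ℝ≥0 := C2 * (K^2).toNNReal * NNReal.sqrt C3 * C1^2 with hG
  refine ⟨G + 1, by positivity, fun q => ?_⟩
  obtain ⟨F, E, hF, hEc, hE0, ⟨D, hD⟩, hEn, hM⟩ := hsob q
  refine ⟨PP q, fun η hη => ?_, ?_⟩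
  · exact pv_tendsto (fun r => Sr r q η) _ (le_max_left _ _) (hcore β K D q F E hβ hF hEc hE0 hD hM η hη).1
  · set e : Euc n → ℝ≥0∞ := fun x => ENNReal.ofReal (E x) with he
    have hem : Measurable e := hEc.measurable.ennreal_ofReal
    have hconv := hconv e hem
    set T : Euc n → ℝ≥0∞ := fun η => ENNReal.ofReal (jap η ^ α) * ENNReal.ofReal (‖η‖⁻¹) * ∫⁻ ξ, ENNReal.ofReal (kk β η ξ) * (e ξ * e (η - ξ)) with hT
    have hset : MeasurableSet {η : Euc n | 1 ≤ ‖η‖} := measurableSet_le (by fun_prop) (by fun_prop)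
    set A : ℝ≥0∞ := C2 * ENNReal.ofReal (K^2) with hA
    have hAt : A ≠ ⊤ := by rw [hA]; finiteness
    have ptw : ∀ η : Euc n, ‖(jap η ^ α : ℝ) • ((χ η : ℂ) * ((Real.pi : ℂ) * Complex.I * Sr 1 (⇑q) η + PP q η))‖ₑ ≤
        A * {η : Euc n | 1 ≤ ‖η‖}.indicator T η := by
      intro η
      have hj : 0 ≤ jap η ^ α := by unfold jap; positivity
      rw [enorm_smul, enorm_mul]
      by_cases h1 : 1 ≤ ‖η‖
      · rw [indicator_of_mem (show η ∈ {η : Euc n | 1 ≤ ‖η‖} from h1)]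
        have c1 : ‖(χ η : ℂ)‖ₑ ≤ 1 := by
          rw [← ofReal_norm, Complex.norm_real, Real.norm_eq_abs, abs_of_nonneg (hχ01 η).1]
          exact ENNReal.ofReal_le_one.2 (hχ01 η).2
        have c2 : ‖(jap η ^ α : ℝ)‖ₑ = ENNReal.ofReal (jap η ^ α) := by
          rw [← ofReal_norm, Real.norm_eq_abs, abs_of_nonneg hj]
        rw [c2]
        have c3 := hpt β K D q F E hβ hF hEc hE0 hD hM η h1
        calc _ ≤ ENNReal.ofReal (jap η ^ α) * (1 * (A * (ENNReal.ofReal (‖η‖⁻¹) * ∫⁻ ξ, ENNReal.ofReal (kk β η ξ) * (e ξ * e (η - ξ))))) := by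
              gcongr
          _ = _ := by rw [hT]; ring
      · have : χ η = 0 := hχ0 η (by push Not at h1; linarith)
        rw [this]; simp
    rw [eLpNorm_eq_lintegral_rpow_enorm_toReal (by norm_num) (by norm_num)]
    simp only [ENNReal.toReal_ofNat]
    have hle : ∫⁻ η : Euc n, ‖(jap η ^ α : ℝ) • ((χ η : ℂ) * ((Real.pi : ℂ) * Complex.I * Sr 1 (⇑q) η + PP q η))‖ₑ ^ (2:ℝ) ≤
        A^2 * (C3 * (∫⁻ ξ, e ξ ^ 2)^2) := by
      calc _ ≤ ∫⁻ η : Euc n, A^2 * {η : Euc n | 1 ≤ ‖η‖}.indicator (fun η => T η ^ 2) η := by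
            refine lintegral_mono fun η => ?_
            rw [ENNReal.rpow_ofNat]
            refine (pow_le_pow_left₀ bot_le (ptw η) 2).trans (le_of_eq ?_)
            rw [mul_pow]
            congr 1
            by_cases h1 : η ∈ {η : Euc n | 1 ≤ ‖η‖}
            · rw [indicator_of_mem h1, indicator_of_mem h1]
            · rw [indicator_of_notMem h1, indicator_of_notMem h1]; simp
        _ = A^2 * ∫⁻ η in {η : Euc n | 1 ≤ ‖η‖}, T η ^ 2 := by
            rw [lintegral_const_mul' _ _ (by finiteness), lintegral_indicator hset]
        _ ≤ _ := by gcongr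
    have hE2 : ∫⁻ ξ, e ξ ^ 2 = (eLpNorm E 2 volume)^2 := by
      rw [eLpNorm_eq_lintegral_rpow_enorm_toReal (by norm_num) (by norm_num)]
      simp only [ENNReal.toReal_ofNat]
      rw [← ENNReal.rpow_natCast, ← ENNReal.rpow_mul]
      norm_num
      refine lintegral_congr fun x => ?_
      rw [he, ← ofReal_norm, Real.norm_eq_abs, abs_of_nonneg (hE0 x)]
    set W := wSobNorm β 2 (⇑q)
    have hC3 : (C3 : ℝ≥0∞) = (NNReal.sqrt C3 : ℝ≥0∞)^2 := by
      rw [← ENNReal.coe_pow, NNReal.sq_sqrt]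
    have hle2 : A^2 * (C3 * (∫⁻ ξ, e ξ ^ 2)^2) ≤ ((G:ℝ≥0∞) * W^2)^2 := by
      calc _ ≤ A^2 * ((NNReal.sqrt C3 : ℝ≥0∞)^2 * ((C1 * W)^2)^2) := by
            rw [hE2, hC3]; gcongr
        _ = _ := by
            rw [hG, hA]; push_cast
            change _ = (C2 * ENNReal.ofReal (K^2) * _ * _ * _)^2
            ring
    calc _ ≤ (((G:ℝ≥0∞) * W^2)^2) ^ (1/(2:ℝ)) := by
          gcongr
          exact hle.trans hle2
      _ = (G:ℝ≥0∞) * W^2 := by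
          rw [← ENNReal.rpow_natCast, ← ENNReal.rpow_mul]; norm_num
      _ ≤ _ := by
          gcongr
          rw [← ENNReal.ofReal_coe_nnreal]
          exact ENNReal.ofReal_le_ofReal (by linarith)

end Helpers

/-- the Sobolev bound for the double dispersion operator of backscattering:
the principal value `P(S_·(q))(η)` exists for `η ≠ 0` and
`‖⟨·⟩^α χ·(iπS₁(q) + P(S_·(q)))‖_{L²} ≤ C ‖q‖²_{W^{β,2}_2}`. -/
theorem stmt8 (n : ℕ) (hn : 2 ≤ n) (β α : ℝ) (hβ : 0 ≤ β)
    (hrange : (((n : ℝ) - 3) / 2 < β ∧ β < ((n : ℝ) - 1) / 2 ∧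
        α < 2 * β - ((n : ℝ) - 3) / 2) ∨
      (((n : ℝ) - 1) / 2 ≤ β ∧ α < β + 1))
    (C₀ : ℝ) (hC₀ : 1 ≤ C₀) (χ : Euc n → ℝ) (hχsm : ContDiff ℝ (⊤ : ℕ∞) χ)
    (hχ01 : ∀ ξ, χ ξ ∈ Set.Icc (0 : ℝ) 1)
    (hχ1 : ∀ ξ : Euc n, 2 * C₀ < ‖ξ‖ → χ ξ = 1)
    (hχ0 : ∀ ξ : Euc n, ‖ξ‖ < C₀ → χ ξ = 0) :
    ∃ C : ℝ, 0 < C ∧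
      ∀ q : SchwartzMap (Euc n) ℂ,
        ∃ P : Euc n → ℂ,
          (∀ η : Euc n, η ≠ 0 → Tendsto
              (fun ε : ℝ => ∫ r in {r : ℝ | 0 < r ∧ ε < |1 - r|},
                  Sr r (⇑q) η / ((1 - r : ℝ) : ℂ))
              (nhdsWithin 0 (Set.Ioi 0)) (nhds (P η))) ∧
          eLpNorm (fun η : Euc n => (jap η ^ α : ℝ) •
              ((χ η : ℂ) * ((Real.pi : ℂ) * Complex.I * Sr 1 (⇑q) η + P η))) 2 volume
            ≤ ENNReal.ofReal C * (wSobNorm β 2 (⇑q)) ^ 2 := by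
  exact stmt8_aux n hn β α hβ hrange C₀ hC₀ χ hχ01 hχ0
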